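/- arXiv:1702.03961 — 7 statements merged into one kernel-verified Lean document; each statement's English description precedes it below -/
import Mathlib

section
/- Let Σ be an alphabet of size k ≥ 2 and let M be a DFA over Σ with n states, and set h = ⌈log₂ k⌉. Then there exists a DFA M' over a two-letter alphabet with (2^h − 1)·n states such that the universal lengths of M' are exactly the numbers h·ℓ where ℓ is a universal length of M; in particular, M' has a universal length if and only if M does, and in that case the minimal universality length of M' equals h times the minimal universality length of M. -/
/-- `ℓ` is a universal length for the language `L`: every word of length `ℓ` belongs to `L`. -/
def IsUnivLength {α : Type*} (L : Language α) (ℓ : ℕ) : Prop :=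
  ∀ w : List α, w.length = ℓ → w ∈ L

/-- Heap index reached from heap index `i` after reading the bits `w`. -/
def heapVal (i : ℕ) (w : List Bool) : ℕ := w.foldl (fun m b => 2 * m + b.toNat) i

theorem heapVal_bounds (w : List Bool) (i : ℕ) :
    i * 2 ^ w.length ≤ heapVal i w ∧ heapVal i w < (i + 1) * 2 ^ w.length := by
  induction w generalizing i with
  | nil => simp [heapVal]
  | cons b w ih =>
    have h := ih (2 * i + b.toNat)
    have e : heapVal i (b :: w) = heapVal (2 * i + b.toNat) w := rfl
    rw [e, List.length_cons, pow_succ]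
    have hb : b.toNat ≤ 1 := Bool.toNat_le b
    have hp : 0 < 2 ^ w.length := by positivity
    constructor
    · refine le_trans ?_ h.1
      nlinarith
    · refine lt_of_lt_of_le h.2 ?_
      nlinarith

theorem heapVal_append (w : List Bool) (b : Bool) (i : ℕ) :
    heapVal i (w ++ [b]) = 2 * heapVal i w + b.toNat := by
  simp [heapVal]

theorem heapVal_surj (h m : ℕ) (h1 : 2 ^ h ≤ m) (h2 : m < 2 ^ (h + 1)) :
    ∃ w : List Bool, w.length = h ∧ heapVal 1 w = m := by
  induction h generalizing m with
  | zero => exact ⟨[], rfl, by simp [heapVal] at *; omega⟩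
  | succ h ih =>
    obtain ⟨w, hw, hv⟩ := ih (m / 2) (by rw [pow_succ] at h1; omega)
      (by rw [pow_succ] at h2; omega)
    refine ⟨w ++ [decide (m % 2 = 1)], by simp [hw], ?_⟩
    rw [heapVal_append, hv]
    rcases Nat.mod_two_eq_zero_or_one m with h | h <;> simp [h] <;> omega

/-- The binarized automaton; `(i, q)` is the tree node with heap index `i + 1` of the
complete binary tree attached to the state `q`. -/
def binDFA {σ Q : Type} (M : DFA σ Q) (h : ℕ) (hh : 0 < 2 ^ h - 1) (f : ℕ → σ) :
    DFA Bool (Fin (2 ^ h - 1) × Q) where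
  step s b :=
    if hm : 2 * (s.1.val + 1) + b.toNat < 2 ^ h then
      (⟨2 * (s.1.val + 1) + b.toNat - 1, by omega⟩, s.2)
    else (⟨0, hh⟩, M.step s.2 (f (2 * (s.1.val + 1) + b.toNat)))
  start := (⟨0, hh⟩, M.start)
  accept := {s | s.1.val = 0 ∧ s.2 ∈ M.accept}

section
variable {σ Q : Type} (M : DFA σ Q) (h : ℕ) (hh : 0 < 2 ^ h - 1) (f : ℕ → σ)

theorem binDFA_short (w : List Bool) (q : Q) (hw : w.length < h) :
    ((((binDFA M h hh f).evalFrom (⟨0, hh⟩, q) w).1 : ℕ) + 1 = heapVal 1 w) ∧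
      ((binDFA M h hh f).evalFrom (⟨0, hh⟩, q) w).2 = q := by
  induction w using List.reverseRecOn with
  | nil => simp [heapVal]
  | append_singleton w b ih =>
    have hb := (heapVal_bounds (w ++ [b]) 1).2
    have hle : 2 ^ ((w ++ [b]).length + 1) ≤ 2 ^ h := Nat.pow_le_pow_right (by norm_num) hw
    rw [pow_succ] at hle
    rw [heapVal_append] at hb
    obtain ⟨i1, i2⟩ := ih (by simp at hw; omega)
    rw [DFA.evalFrom_append_singleton, heapVal_append]
    generalize (binDFA M h hh f).evalFrom (⟨0, hh⟩, q) w = s at *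
    have hc : 2 * (s.1.val + 1) + b.toNat < 2 ^ h := by rw [i1]; omega
    simp only [binDFA, hc, dif_pos]
    refine ⟨?_, i2⟩
    rw [← i1]
    omega

theorem binDFA_block (w : List Bool) (q : Q) (hw : w.length = h) (h0 : 0 < h) :
    (binDFA M h hh f).evalFrom (⟨0, hh⟩, q) w = (⟨0, hh⟩, M.step q (f (heapVal 1 w))) := by
  rcases List.eq_nil_or_concat w with rfl | ⟨w, b, rfl⟩
  · simp at hw; omega
  · have hb := (heapVal_bounds (w ++ [b]) 1).1
    simp only [List.concat_eq_append] at *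
    rw [hw, heapVal_append] at hb
    obtain ⟨i1, i2⟩ := binDFA_short M h hh f w q (by simp at hw; omega)
    rw [DFA.evalFrom_append_singleton, heapVal_append]
    generalize (binDFA M h hh f).evalFrom (⟨0, hh⟩, q) w = s at *
    have hc : ¬ 2 * (s.1.val + 1) + b.toNat < 2 ^ h := by rw [i1]; omega
    simp only [binDFA, hc, dif_neg, not_false_eq_true]
    rw [i1, i2]

theorem binDFA_univ (h0 : 0 < h)
    (hf : ∀ a, ∃ m, 2 ^ h ≤ m ∧ m < 2 ^ (h + 1) ∧ f m = a) (l : ℕ) (q : Q) :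
    (∀ w : List Bool, w.length = h * l →
      (binDFA M h hh f).evalFrom (⟨0, hh⟩, q) w ∈ (binDFA M h hh f).accept) ↔
    (∀ w : List σ, w.length = l → M.evalFrom q w ∈ M.accept) := by
  induction l generalizing q with
  | zero => simp [binDFA]
  | succ l ih =>
    constructor
    · intro H w hw
      match w, hw with
      | a :: w, hw =>
        obtain ⟨m, h1, h2, rfl⟩ := hf a
        obtain ⟨u, hu, rfl⟩ := heapVal_surj h m h1 h2
        rw [DFA.evalFrom_cons]
        refine (ih _).1 (fun v hv => ?_) w (by simpa using hw)
        have := H (u ++ v) (by simp [hu, hv]; ring)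
        rwa [DFA.evalFrom_of_append, binDFA_block M h hh f u q hu h0] at this
    · intro H w hw
      have hl : (w.take h).length = h := by
        rw [List.length_take, hw, mul_add]; simp
      rw [← List.take_append_drop h w, DFA.evalFrom_of_append,
        binDFA_block M h hh f _ q hl h0]
      refine (ih _).2 (fun v hv => ?_) _ (by simp [hw, mul_add])
      exact H (f _ :: v) (by simp [hv])

theorem binDFA_not (h0 : 0 < h) (r : ℕ) (hr : 0 < r) (hrh : r < h) (l : ℕ) (q : Q)
    (w : List Bool) (hw : w.length = h * l + r) :
    (binDFA M h hh f).evalFrom (⟨0, hh⟩, q) w ∉ (binDFA M h hh f).accept := by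
  induction l generalizing q w with
  | zero =>
    simp only [mul_zero, zero_add] at hw
    have h1 := (binDFA_short M h hh f w q (by omega)).1
    have h2 := (heapVal_bounds w 1).1
    have h3 : 2 ^ 1 ≤ 2 ^ w.length := Nat.pow_le_pow_right (by norm_num) (by omega)
    rintro ⟨h4, -⟩
    omega
  | succ l ih =>
    have hl : (w.take h).length = h := by
      rw [List.length_take, hw, mul_add]; simp; omega
    rw [← List.take_append_drop h w, DFA.evalFrom_of_append,
      binDFA_block M h hh f _ q hl h0]
    refine ih _ _ ?_
    rw [List.length_drop, hw, mul_add]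
    omega

end

/-- Binarization of a DFA: for an alphabet of size `k ≥ 2` and `h = ⌈log₂ k⌉`, there is a
DFA over a two-letter alphabet with `(2^h - 1) * n` states whose universal lengths are exactly
`h * ℓ` for universal lengths `ℓ` of `M`; consequently the minimal universality lengths are
related by the factor `h`. -/
theorem dfa_binarization (k n : ℕ) (hk : 2 ≤ k)
    (σ : Type) [Fintype σ] (hσ : Fintype.card σ = k)
    (Q : Type) [Fintype Q] (hQ : Fintype.card Q = n)
    (M : DFA σ Q) :
    ∃ (Q' : Type) (inst : Fintype Q'),
      @Fintype.card Q' inst = (2 ^ Nat.clog 2 k - 1) * n ∧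
      ∃ M' : DFA Bool Q',
        (∀ ℓ' : ℕ, IsUnivLength M'.accepts ℓ' ↔
            ∃ ℓ : ℕ, IsUnivLength M.accepts ℓ ∧ ℓ' = Nat.clog 2 k * ℓ) ∧
        ((∃ ℓ : ℕ, IsUnivLength M.accepts ℓ) →
          ((∃ ℓ' : ℕ, IsUnivLength M'.accepts ℓ') ∧
            sInf {ℓ' : ℕ | IsUnivLength M'.accepts ℓ'} =
              Nat.clog 2 k * sInf {ℓ : ℕ | IsUnivLength M.accepts ℓ})) := by
  classical
  have h0 : 0 < Nat.clog 2 k := Nat.clog_pos (by norm_num) hk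
  have hkh : k ≤ 2 ^ Nat.clog 2 k := Nat.le_pow_clog (by norm_num) k
  generalize Nat.clog 2 k = h at *
  have hh : 0 < 2 ^ h - 1 := by omega
  let e : σ ≃ Fin k := Fintype.equivFinOfCardEq hσ
  let f : ℕ → σ := fun m => e.symm ⟨(m - 2 ^ h) % k, Nat.mod_lt _ (by omega)⟩
  have hf : ∀ a, ∃ m, 2 ^ h ≤ m ∧ m < 2 ^ (h + 1) ∧ f m = a := by
    intro a
    have ha := (e a).isLt
    refine ⟨2 ^ h + e a, by omega, by rw [pow_succ]; omega, ?_⟩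
    simp only [f]
    rw [Equiv.symm_apply_eq]
    apply Fin.ext
    simp [Nat.mod_eq_of_lt ha]
  have key : ∀ ℓ' : ℕ, IsUnivLength (binDFA M h hh f).accepts ℓ' ↔
      ∃ ℓ : ℕ, IsUnivLength M.accepts ℓ ∧ ℓ' = h * ℓ := by
    intro ℓ'
    constructor
    · intro H
      have hdiv := Nat.div_add_mod ℓ' h
      rcases Nat.eq_zero_or_pos (ℓ' % h) with hr | hr
      · rw [hr, add_zero] at hdiv
        refine ⟨ℓ' / h, ?_, hdiv.symm⟩
        exact (binDFA_univ M h hh f h0 hf (ℓ' / h) M.start).1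
          (fun w hw => H w (hw.trans hdiv))
      · exact absurd (H (List.replicate ℓ' true) (by simp))
          (binDFA_not M h hh f h0 _ hr (Nat.mod_lt _ h0) (ℓ' / h) M.start _ (by simp [hdiv]))
    · rintro ⟨ℓ, H, rfl⟩
      exact (binDFA_univ M h hh f h0 hf ℓ M.start).2 H
  refine ⟨Fin (2 ^ h - 1) × Q, inferInstance, by simp [hQ], binDFA M h hh f, key, ?_⟩
  rintro ⟨ℓ, hℓ⟩
  have hne : {ℓ' : ℕ | IsUnivLength (binDFA M h hh f).accepts ℓ'}.Nonempty :=
    ⟨h * ℓ, (key _).2 ⟨ℓ, hℓ, rfl⟩⟩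
  refine ⟨hne, le_antisymm ?_ ?_⟩
  · exact Nat.sInf_le ((key _).2 ⟨_, Nat.sInf_mem (s := {ℓ : ℕ | IsUnivLength M.accepts ℓ})
      ⟨ℓ, hℓ⟩, rfl⟩)
  · obtain ⟨m, hm, he⟩ := (key _).1 (Nat.sInf_mem hne)
    rw [he]
    exact Nat.mul_le_mul_left _ (Nat.sInf_le hm)
end

section
/- Let Σ be an alphabet of size k ≥ 2 and let M be an NFA over Σ with n states, and set h = ⌈log₂ k⌉. Then there exists an NFA M' over a two-letter alphabet with (2^h − 1)·n states such that the universal lengths of M' are exactly the numbers h·ℓ where ℓ is a universal length of M; in particular, M' has a universal length if and only if M does, and in that case the minimal universality length of M' equals h times the minimal universality length of M. -/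
namespace NfaBin

/-- One step of the decoder: `u` is the decoded word, `v` the current node of the binary tree. -/
def dstep {σ : Type} (h : ℕ) (c : ℕ → σ) (p : List σ × ℕ) (b : Bool) : List σ × ℕ :=
  if 2 * p.2 + b.toNat < 2 ^ h then (p.1, 2 * p.2 + b.toNat)
  else (p.1 ++ [c (2 * p.2 + b.toNat)], 1)

def dec {σ : Type} (h : ℕ) (c : ℕ → σ) (w : List Bool) : List σ × ℕ :=
  w.foldl (dstep h c) ([], 1)

theorem dec_snoc {σ : Type} (h : ℕ) (c : ℕ → σ) (w : List Bool) (b : Bool) :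
    dec h c (w ++ [b]) = dstep h c (dec h c w) b := by
  simp [dec]

theorem dec_inv {σ : Type} (h : ℕ) (hh : 1 ≤ h) (c : ℕ → σ) (w : List Bool) :
    ∃ j < h, w.length = h * (dec h c w).1.length + j ∧
      2 ^ j ≤ (dec h c w).2 ∧ (dec h c w).2 < 2 ^ (j + 1) := by
  induction w using List.reverseRecOn with
  | nil => exact ⟨0, by omega, by simp [dec]⟩
  | append_singleton w b ih =>
    obtain ⟨j, hj, hl, h1, h2⟩ := ih
    rw [dec_snoc]
    have hb : b.toNat ≤ 1 := Bool.toNat_le b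
    have e1 : 2 ^ (j + 1) = 2 * 2 ^ j := by ring
    have e2 : 2 ^ (j + 1 + 1) = 2 * (2 * 2 ^ j) := by ring
    unfold dstep
    split_ifs with hc
    · refine ⟨j + 1, ?_, ?_, ?_, ?_⟩
      · have : 2 ^ (j + 1) < 2 ^ h := by omega
        exact (Nat.pow_lt_pow_iff_right (by norm_num)).1 this
      · simp [hl]; omega
      · simp only; omega
      · simp only; omega
    · have hjh : j + 1 = h := by
        by_contra hne
        have : 2 ^ (j + 1 + 1) ≤ 2 ^ h := Nat.pow_le_pow_right (by norm_num) (by omega)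
        omega
      refine ⟨0, by omega, ?_, by simp, by simp⟩
      simp only [List.length_append, List.length_singleton, hl]
      rw [Nat.mul_add]; omega

theorem reach {σ : Type} (h : ℕ) (c : ℕ → σ) (w : List Bool) (u : List σ)
    (hw : dec h c w = (u, 1)) (j : ℕ) (hj : j < h) (v : ℕ) (h1 : 2 ^ j ≤ v)
    (h2 : v < 2 ^ (j + 1)) :
    ∃ wx, dec h c wx = (u, v) ∧ wx.length = w.length + j := by
  induction j generalizing v with
  | zero =>
    have : v = 1 := by simp at h1 h2; omega
    exact ⟨w, by rw [hw, this], rfl⟩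
  | succ j ih =>
    have e1 : 2 ^ (j + 1) = 2 * 2 ^ j := by ring
    have e2 : 2 ^ (j + 1 + 1) = 2 * (2 * 2 ^ j) := by ring
    obtain ⟨wx, hwx, hl⟩ := ih (by omega) (v / 2) (by omega) (by omega)
    have hv : 2 * (v / 2) + (decide (v % 2 = 1)).toNat = v := by
      rcases Nat.mod_two_eq_zero_or_one v with h0 | h0 <;> simp [h0] <;> omega
    have : 2 ^ (j + 1 + 1) ≤ 2 ^ h := Nat.pow_le_pow_right (by norm_num) (by omega)
    refine ⟨wx ++ [decide (v % 2 = 1)], ?_, by simp [hl]; omega⟩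
    rw [dec_snoc, hwx]
    unfold dstep
    simp only [hv]
    rw [if_pos (by omega)]

theorem dec_surj {σ : Type} (h : ℕ) (hh : 1 ≤ h) (c : ℕ → σ)
    (hc : ∀ s, ∃ t, 2 ^ h ≤ t ∧ t < 2 ^ (h + 1) ∧ c t = s) (u : List σ) :
    ∃ w, dec h c w = (u, 1) ∧ w.length = h * u.length := by
  induction u using List.reverseRecOn with
  | nil => exact ⟨[], by simp [dec], by simp⟩
  | append_singleton u s ih =>
    obtain ⟨w, hw, hl⟩ := ih
    obtain ⟨v, h1, h2, rfl⟩ := hc s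
    obtain ⟨j, rfl⟩ : ∃ j, h = j + 1 := ⟨h - 1, by omega⟩
    have e1 : 2 ^ (j + 1) = 2 * 2 ^ j := by ring
    have e2 : 2 ^ (j + 1 + 1) = 2 * (2 * 2 ^ j) := by ring
    obtain ⟨wx, hwx, hlx⟩ := reach _ c w u hw j (by omega) (v / 2) (by omega) (by omega)
    have hv : 2 * (v / 2) + (decide (v % 2 = 1)).toNat = v := by
      rcases Nat.mod_two_eq_zero_or_one v with h0 | h0 <;> simp [h0] <;> omega
    refine ⟨wx ++ [decide (v % 2 = 1)], ?_, ?_⟩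
    · rw [dec_snoc, hwx]
      unfold dstep
      simp only [hv]
      rw [if_neg (by omega)]
    · simp only [List.length_append, List.length_singleton, hlx, hl]
      ring

/-- The binary automaton. -/
def bin {σ Q : Type} (h : ℕ) (c : ℕ → σ) (M : NFA σ Q) :
    NFA Bool ({v : ℕ // v ∈ Finset.Ico 1 (2 ^ h)} × Q) where
  step p b := {r | (2 * p.1.1 + b.toNat < 2 ^ h ∧ r.2 = p.2 ∧ r.1.1 = 2 * p.1.1 + b.toNat) ∨
    (¬ 2 * p.1.1 + b.toNat < 2 ^ h ∧ r.2 ∈ M.step p.2 (c (2 * p.1.1 + b.toNat)) ∧ r.1.1 = 1)}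
  start := {r | r.2 ∈ M.start ∧ r.1.1 = 1}
  accept := {r | r.2 ∈ M.accept ∧ r.1.1 = 1}

theorem dec_mem {σ : Type} (h : ℕ) (hh : 1 ≤ h) (c : ℕ → σ) (w : List Bool) :
    (dec h c w).2 ∈ Finset.Ico 1 (2 ^ h) := by
  obtain ⟨j, hj, -, h1, h2⟩ := dec_inv h hh c w
  have : 2 ^ (j + 1) ≤ 2 ^ h := Nat.pow_le_pow_right (by norm_num) (by omega)
  have : 0 < 2 ^ j := by positivity
  rw [Finset.mem_Ico]; omega

theorem eval_bin {σ Q : Type} (h : ℕ) (hh : 1 ≤ h) (c : ℕ → σ) (M : NFA σ Q) (w : List Bool)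
    (r : {v : ℕ // v ∈ Finset.Ico 1 (2 ^ h)} × Q) :
    r ∈ (bin h c M).eval w ↔ r.2 ∈ M.eval (dec h c w).1 ∧ r.1.1 = (dec h c w).2 := by
  induction w using List.reverseRecOn generalizing r with
  | nil => simp [dec, bin]
  | append_singleton w b ih =>
    rw [NFA.eval_append_singleton, NFA.mem_stepSet, dec_snoc]
    have hm := dec_mem h hh c w
    constructor
    · rintro ⟨t, ht, hr⟩
      obtain ⟨t1, t2⟩ := (ih t).1 ht
      simp only [bin, Set.mem_ofPred_eq] at hr
      rw [t2] at hr
      unfold dstep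
      rcases hr with ⟨a1, a2, a3⟩ | ⟨a1, a2, a3⟩
      · rw [if_pos a1]; exact ⟨by rw [a2]; exact t1, a3⟩
      · rw [if_neg a1]
        refine ⟨?_, a3⟩
        rw [NFA.eval_append_singleton, NFA.mem_stepSet]
        exact ⟨_, t1, a2⟩
    · unfold dstep
      split_ifs with a1
      · rintro ⟨r1, r2⟩
        exact ⟨(⟨_, hm⟩, r.2), (ih _).2 ⟨r1, rfl⟩, Or.inl ⟨a1, rfl, r2⟩⟩
      · rintro ⟨r1, r2⟩
        rw [NFA.eval_append_singleton, NFA.mem_stepSet] at r1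
        obtain ⟨q, q1, q2⟩ := r1
        exact ⟨(⟨_, hm⟩, q), (ih _).2 ⟨q1, rfl⟩, Or.inr ⟨a1, q2, r2⟩⟩

theorem accepts_bin {σ Q : Type} (h : ℕ) (hh : 1 ≤ h) (c : ℕ → σ) (M : NFA σ Q)
    (w : List Bool) :
    w ∈ (bin h c M).accepts ↔ (dec h c w).1 ∈ M.accepts ∧ (dec h c w).2 = 1 := by
  constructor
  · rintro ⟨r, ⟨r1, r2⟩, hr⟩
    obtain ⟨a, b⟩ := (eval_bin h hh c M w r).1 hr
    exact ⟨⟨r.2, r1, a⟩, by omega⟩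
  · rintro ⟨⟨q, q1, q2⟩, hv⟩
    exact ⟨(⟨_, dec_mem h hh c w⟩, q), ⟨q1, hv⟩, (eval_bin h hh c M w _).2 ⟨q2, rfl⟩⟩

theorem univ_bin {σ Q : Type} (h : ℕ) (hh : 1 ≤ h) (c : ℕ → σ)
    (hc : ∀ s, ∃ t, 2 ^ h ≤ t ∧ t < 2 ^ (h + 1) ∧ c t = s) (M : NFA σ Q) (m : ℕ) :
    IsUnivLength (bin h c M).accepts m ↔ ∃ l, IsUnivLength M.accepts l ∧ m = h * l := by
  constructor
  · intro H
    have h0 := (accepts_bin h hh c M _).1 (H (List.replicate m false) (by simp))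
    obtain ⟨j, hj, hl, h1, h2⟩ := dec_inv h hh c (List.replicate m false)
    have hj0 : j = 0 := by
      by_contra hne
      have : 2 ^ 1 ≤ 2 ^ j := Nat.pow_le_pow_right (by norm_num) (by omega)
      omega
    rw [List.length_replicate, hj0, Nat.add_zero] at hl
    refine ⟨_, ?_, hl⟩
    intro u hu
    obtain ⟨w, hw, hwl⟩ := dec_surj h hh c hc u
    have := (accepts_bin h hh c M w).1 (H w (by rw [hwl, hu, ← hl]))
    rw [hw] at this
    exact this.1
  · rintro ⟨l, hl, rfl⟩ w hw
    obtain ⟨j, hj, hlx, h1, h2⟩ := dec_inv h hh c w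
    rw [hw] at hlx
    have hd : l = (dec h c w).1.length := by
      have := congrArg (· / h) hlx
      simpa [Nat.mul_add_div (show h > 0 by omega), Nat.mul_div_cancel_left l (show 0 < h by omega),
        Nat.div_eq_of_lt hj] using this
    have hj0 : j = 0 := by rw [← hd] at hlx; omega
    subst hj0
    exact (accepts_bin h hh c M w).2 ⟨hl _ hd.symm, by simp at h1 h2; omega⟩

end NfaBin

/-- Binarization of an NFA: for an alphabet of size `k ≥ 2` and `h = ⌈log₂ k⌉`, there is an
NFA over a two-letter alphabet with `(2^h - 1) * n` states whose universal lengths are exactly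
`h * ℓ` for universal lengths `ℓ` of `M`; consequently the minimal universality lengths are
related by the factor `h`. -/
theorem nfa_binarization (k n : ℕ) (hk : 2 ≤ k)
    (σ : Type) [Fintype σ] (hσ : Fintype.card σ = k)
    (Q : Type) [Fintype Q] (hQ : Fintype.card Q = n)
    (M : NFA σ Q) :
    ∃ (Q' : Type) (inst : Fintype Q'),
      @Fintype.card Q' inst = (2 ^ Nat.clog 2 k - 1) * n ∧
      ∃ M' : NFA Bool Q',
        (∀ ℓ' : ℕ, IsUnivLength M'.accepts ℓ' ↔
            ∃ ℓ : ℕ, IsUnivLength M.accepts ℓ ∧ ℓ' = Nat.clog 2 k * ℓ) ∧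
        ((∃ ℓ : ℕ, IsUnivLength M.accepts ℓ) →
          ((∃ ℓ' : ℕ, IsUnivLength M'.accepts ℓ') ∧
            sInf {ℓ' : ℕ | IsUnivLength M'.accepts ℓ'} =
              Nat.clog 2 k * sInf {ℓ : ℕ | IsUnivLength M.accepts ℓ})) := by
  have hh : 1 ≤ Nat.clog 2 k := Nat.clog_pos (by norm_num) hk
  have hkh : k ≤ 2 ^ Nat.clog 2 k := Nat.le_pow_clog (by norm_num) k
  generalize Nat.clog 2 k = h at hh hkh ⊢
  let e : σ ≃ Fin k := Fintype.equivFinOfCardEq hσ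
  let c : ℕ → σ := fun t => e.symm ⟨(t - 2 ^ h) % k, Nat.mod_lt _ (by omega)⟩
  have hc : ∀ s, ∃ t, 2 ^ h ≤ t ∧ t < 2 ^ (h + 1) ∧ c t = s := by
    intro s
    have := (e s).2
    refine ⟨2 ^ h + (e s).1, by omega, by rw [pow_succ]; omega, ?_⟩
    simp [c, Nat.mod_eq_of_lt this]
  have key := NfaBin.univ_bin h hh c hc M
  refine ⟨{v : ℕ // v ∈ Finset.Ico 1 (2 ^ h)} × Q,
    @instFintypeProd _ _ (Finset.fintypeCoeSort _) _, ?_, NfaBin.bin h c M, key, ?_⟩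
  · rw [Fintype.card_prod, Fintype.card_coe, Nat.card_Ico, hQ]
  · rintro ⟨l, hl⟩
    have hne : ∃ m, IsUnivLength (NfaBin.bin h c M).accepts m := ⟨_, (key _).2 ⟨l, hl, rfl⟩⟩
    refine ⟨hne, le_antisymm ?_ ?_⟩
    · exact Nat.sInf_le ((key _).2 ⟨_, Nat.sInf_mem (s := {l | IsUnivLength M.accepts l}) ⟨l, hl⟩, rfl⟩)
    · obtain ⟨a, ha, hae⟩ := (key _).1
        (Nat.sInf_mem (s := {m | IsUnivLength (NfaBin.bin h c M).accepts m}) hne)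
      rw [hae]
      exact Nat.mul_le_mul_left _ (Nat.sInf_le ha)
end

section
/- Let Σ be an alphabet of size k ≥ 2 and let r be a regular expression over Σ containing n input symbols (occurrences of single-letter atoms), and set h = ⌈log₂ k⌉. Then there exists a regular expression r' over a two-letter alphabet with at most (2h − 1)·n input symbols such that the universal lengths of the language of r' are exactly the numbers h·ℓ where ℓ is a universal length of the language of r; in particular, r' has a universal length if and only if r does, and in that case the minimal universality length of r' equals h times that of r. -/
/-- The number of input symbols (occurrences of single-letter atoms) of a regular expression. -/
def symCount {α : Type*} : RegularExpression α → ℕ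
  | RegularExpression.zero => 0
  | RegularExpression.epsilon => 0
  | RegularExpression.char _ => 1
  | RegularExpression.plus r s => symCount r + symCount s
  | RegularExpression.comp r s => symCount r + symCount s
  | RegularExpression.star r => symCount r

/-- Prefix a regular expression by a fixed word. -/
def prefRE : List Bool → RegularExpression Bool → RegularExpression Bool
  | [], R => R
  | b :: p, R => RegularExpression.comp (RegularExpression.char b) (prefRE p R)

lemma symCount_prefRE (p : List Bool) (R : RegularExpression Bool) :
    symCount (prefRE p R) = p.length + symCount R := by
  induction p with
  | nil => simp [prefRE]
  | cons b p ih => simp [prefRE, symCount, ih]; omega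

lemma mem_prefRE (p : List Bool) (R : RegularExpression Bool) (x : List Bool) :
    x ∈ (prefRE p R).matches' ↔ ∃ y ∈ R.matches', x = p ++ y := by
  induction p generalizing x with
  | nil => simp [prefRE]
  | cons b p ih =>
    simp only [prefRE, RegularExpression.matches', Language.mem_mul]
    constructor
    · rintro ⟨a, ha, z, hz, rfl⟩
      obtain ⟨y, hy, rfl⟩ := (ih z).1 hz
      have ha : a = [b] := ha
      exact ⟨y, hy, by simp [ha]⟩
    · rintro ⟨y, hy, rfl⟩
      exact ⟨[b], rfl, p ++ y, (ih _).2 ⟨y, hy, rfl⟩, by simp⟩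

/-- Substitute regular expressions for letters. -/
def substRE {σ : Type} (c : σ → RegularExpression Bool) :
    RegularExpression σ → RegularExpression Bool
  | RegularExpression.zero => RegularExpression.zero
  | RegularExpression.epsilon => RegularExpression.epsilon
  | RegularExpression.char a => c a
  | RegularExpression.plus r s => RegularExpression.plus (substRE c r) (substRE c s)
  | RegularExpression.comp r s => RegularExpression.comp (substRE c r) (substRE c s)
  | RegularExpression.star r => RegularExpression.star (substRE c r)

lemma symCount_substRE {σ : Type} (c : σ → RegularExpression Bool) (B : ℕ)
    (hc : ∀ a, symCount (c a) ≤ B) (r : RegularExpression σ) :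
    symCount (substRE c r) ≤ B * symCount r := by
  induction r with
  | zero => simp [substRE, symCount]
  | epsilon => simp [substRE, symCount]
  | char a => simpa [substRE, symCount] using hc a
  | plus r s h1 h2 => simp only [substRE, symCount]; linarith
  | comp r s h1 h2 => simp only [substRE, symCount]; linarith
  | star r h1 => simpa only [substRE, symCount] using h1

/-- `Enc C w u`: the word `w` is an encoding of `u`, where `C a` is the set of codes of `a`. -/
def Enc {σ : Type} (C : σ → Language Bool) : List Bool → List σ → Prop
  | w, [] => w = []
  | w, a :: u => ∃ x y, w = x ++ y ∧ x ∈ C a ∧ Enc C y u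

lemma Enc.append {σ : Type} {C : σ → Language Bool} {w₁ w₂ : List Bool} {u₁ u₂ : List σ}
    (h₁ : Enc C w₁ u₁) (h₂ : Enc C w₂ u₂) : Enc C (w₁ ++ w₂) (u₁ ++ u₂) := by
  induction u₁ generalizing w₁ with
  | nil => simp only [Enc] at h₁; subst h₁; simpa using h₂
  | cons a u ih =>
    obtain ⟨x, y, rfl, hx, hy⟩ := h₁
    exact ⟨x, y ++ w₂, by simp, hx, ih hy⟩

lemma Enc.split {σ : Type} {C : σ → Language Bool} {w : List Bool} {u₁ u₂ : List σ}
    (h : Enc C w (u₁ ++ u₂)) : ∃ w₁ w₂, w = w₁ ++ w₂ ∧ Enc C w₁ u₁ ∧ Enc C w₂ u₂ := by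
  induction u₁ generalizing w with
  | nil => exact ⟨[], w, by simp, rfl, h⟩
  | cons a u ih =>
    obtain ⟨x, y, rfl, hx, hy⟩ := h
    obtain ⟨w₁, w₂, rfl, h₁, h₂⟩ := ih hy
    exact ⟨x ++ w₁, w₂, by simp, ⟨x, w₁, rfl, hx, h₁⟩, h₂⟩

lemma mem_substRE {σ : Type} (c : σ → RegularExpression Bool) (r : RegularExpression σ)
    (w : List Bool) : w ∈ (substRE c r).matches' ↔
      ∃ u ∈ r.matches', Enc (fun a => (c a).matches') w u := by
  induction r generalizing w with
  | zero =>
    constructor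
    · intro h; exact absurd h (Language.notMem_zero w)
    · rintro ⟨u, h, _⟩; exact absurd h (Language.notMem_zero u)
  | epsilon =>
    constructor
    · intro h
      exact ⟨[], rfl, h⟩
    · rintro ⟨u, h, hu⟩
      have h : u = [] := h
      subst h; exact hu
  | char a =>
    constructor
    · intro h
      exact ⟨[a], rfl, w, [], by simp, h, rfl⟩
    · rintro ⟨u, h, hu⟩
      have h : u = [a] := h
      subst h
      obtain ⟨x, y, rfl, hx, hy⟩ := hu
      have hy : y = [] := hy
      subst hy
      simpa [substRE] using hx
  | plus r s h1 h2 =>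
    simp only [substRE, RegularExpression.matches', Language.mem_add, h1, h2]
    grind
  | comp r s h1 h2 =>
    simp only [substRE, RegularExpression.matches', Language.mem_mul, h1, h2]
    constructor
    · rintro ⟨w₁, ⟨u₁, hu₁, e₁⟩, w₂, ⟨u₂, hu₂, e₂⟩, rfl⟩
      exact ⟨u₁ ++ u₂, ⟨u₁, hu₁, u₂, hu₂, rfl⟩, e₁.append e₂⟩
    · rintro ⟨u, ⟨u₁, hu₁, u₂, hu₂, rfl⟩, e⟩
      obtain ⟨w₁, w₂, rfl, e₁, e₂⟩ := e.split
      exact ⟨w₁, ⟨u₁, hu₁, e₁⟩, w₂, ⟨u₂, hu₂, e₂⟩, rfl⟩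
  | star r h1 =>
    simp only [substRE, RegularExpression.matches', Language.mem_kstar]
    constructor
    · rintro ⟨S, rfl, hS⟩
      induction S with
      | nil => exact ⟨[], ⟨[], rfl, by simp⟩, rfl⟩
      | cons w S ih =>
        obtain ⟨u, ⟨T, rfl, hT⟩, e⟩ := ih (fun y hy => hS y (by simp [hy]))
        obtain ⟨v, hv, e'⟩ := (h1 w).1 (hS w (by simp))
        refine ⟨v ++ T.flatten, ⟨v :: T, by simp, ?_⟩, by simpa using e'.append e⟩
        intro y hy
        rcases List.mem_cons.1 hy with rfl | hy
        · exact hv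
        · exact hT y hy
    · rintro ⟨u, ⟨T, rfl, hT⟩, e⟩
      induction T generalizing w with
      | nil => exact ⟨[], by simpa [Enc] using e, by simp⟩
      | cons v T ih =>
        rw [List.flatten_cons] at e
        obtain ⟨w₁, w₂, rfl, e₁, e₂⟩ := e.split
        obtain ⟨S, rfl, hS⟩ := ih w₂ (fun y hy => hT y (by simp [hy])) e₂
        refine ⟨w₁ :: S, by simp, ?_⟩
        intro y hy
        rcases List.mem_cons.1 hy with rfl | hy
        · exact (h1 _).2 ⟨v, hT v (by simp), e₁⟩
        · exact hS y hy

lemma Enc.length {σ : Type} {C : σ → Language Bool} {h : ℕ}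
    (hl : ∀ a, ∀ x ∈ C a, x.length = h) {w : List Bool} {u : List σ} (e : Enc C w u) :
    w.length = h * u.length := by
  induction u generalizing w with
  | nil => simp only [Enc] at e; simp [e]
  | cons a u ih =>
    obtain ⟨x, y, rfl, hx, hy⟩ := e
    simp [hl a x hx, ih hy]; ring

lemma Enc.unique {σ : Type} {C : σ → Language Bool} {h : ℕ}
    (hl : ∀ a, ∀ x ∈ C a, x.length = h) (hd : ∀ a b x, x ∈ C a → x ∈ C b → a = b)
    {w : List Bool} {u v : List σ} (hu : u.length = v.length)
    (e : Enc C w u) (e' : Enc C w v) : u = v := by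
  induction u generalizing w v with
  | nil => exact (List.length_eq_zero_iff.1 (by simpa using hu.symm)).symm
  | cons a u ih =>
    cases v with
    | nil => simp at hu
    | cons b v =>
      obtain ⟨x, y, rfl, hx, hy⟩ := e
      obtain ⟨x', y', heq, hx', hy'⟩ := e'
      obtain ⟨rfl, rfl⟩ := List.append_inj heq (by rw [hl a x hx, hl b x' hx'])
      rw [hd a b x hx hx', ih (by simpa using hu) hy hy']

lemma Enc.exists_code {σ : Type} {C : σ → Language Bool} (hn : ∀ a, ∃ x, x ∈ C a)
    (u : List σ) : ∃ w, Enc C w u := by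
  induction u with
  | nil => exact ⟨[], rfl⟩
  | cons a u ih =>
    obtain ⟨w, e⟩ := ih
    obtain ⟨x, hx⟩ := hn a
    exact ⟨x ++ w, x, w, rfl, hx, e⟩

lemma Enc.exists_decode {σ : Type} {C : σ → Language Bool} {h : ℕ}
    (hs : ∀ x : List Bool, x.length = h → ∃ a, x ∈ C a)
    (ℓ : ℕ) (w : List Bool) (hw : w.length = h * ℓ) : ∃ u : List σ, u.length = ℓ ∧ Enc C w u := by
  induction ℓ generalizing w with
  | zero => exact ⟨[], rfl, List.length_eq_zero_iff.1 (by simpa using hw)⟩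
  | succ ℓ ih =>
    rw [Nat.mul_succ] at hw
    obtain ⟨u, hu, e⟩ := ih (w.drop h) (by simp [hw])
    obtain ⟨a, ha⟩ := hs (w.take h) (by simp [hw])
    exact ⟨a :: u, by simp [hu], w.take h, w.drop h, by simp, ha, e⟩

lemma exists_words (m : ℕ) : ∃ P : ℕ → List Bool, (∀ i, (P i).length = m) ∧
    (∀ i j, i < 2 ^ m → j < 2 ^ m → P i = P j → i = j) ∧
    (∀ w : List Bool, w.length = m → ∃ i < 2 ^ m, P i = w) := by
  have d : List.Vector Bool m ≃ Fin (2 ^ m) :=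
    Fintype.equivFinOfCardEq (by simp [card_vector])
  refine ⟨fun i => (d.symm (Fin.ofNat (2 ^ m) i)).toList, fun i => by simp, ?_, ?_⟩
  · intro i j hi hj h
    have := d.symm.injective (List.Vector.toList_injective h)
    have := congrArg Fin.val this
    simpa [Nat.mod_eq_of_lt hi, Nat.mod_eq_of_lt hj] using this
  · intro w hw
    obtain ⟨v, rfl⟩ : ∃ v : List.Vector Bool m, v.toList = w := ⟨⟨w, hw⟩, rfl⟩
    refine ⟨(d v).val, (d v).isLt, ?_⟩
    have h0 : Fin.ofNat (2 ^ m) (d v).val = d v := Fin.ext (Nat.mod_eq_of_lt (d v).isLt)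
    simp only [h0, Equiv.symm_apply_apply]

lemma exists_codes (k : ℕ) (hk : 2 ≤ k) (σ : Type) [Fintype σ] (hσ : Fintype.card σ = k) :
    ∃ c : σ → RegularExpression Bool,
      (∀ a, symCount (c a) ≤ 2 * Nat.clog 2 k - 1) ∧
      (∀ a, ∀ x ∈ (c a).matches', x.length = Nat.clog 2 k) ∧
      (∀ a b x, x ∈ (c a).matches' → x ∈ (c b).matches' → a = b) ∧
      (∀ a, ∃ x, x ∈ (c a).matches') ∧
      (∀ x : List Bool, x.length = Nat.clog 2 k → ∃ a, x ∈ (c a).matches') := by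
  obtain ⟨m, hm⟩ : ∃ m, Nat.clog 2 k = m + 1 :=
    ⟨Nat.clog 2 k - 1, by have := Nat.clog_pos (b := 2) (by norm_num) hk; omega⟩
  have hle : k ≤ 2 ^ m + 2 ^ m := by
    have := Nat.le_pow_clog (b := 2) (by norm_num) k
    rw [hm, pow_succ] at this; omega
  have hlt : 2 ^ m < k := by
    by_contra hcon
    have := Nat.clog_le_of_le_pow (b := 2) (not_lt.1 hcon)
    omega
  rw [hm]
  obtain ⟨P, hP1, hP2, hP3⟩ := exists_words m
  have e : σ ≃ Fin k := Fintype.equivFinOfCardEq hσ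
  -- the expression for the letter number `j`
  let g : ℕ → RegularExpression Bool := fun j =>
    if j < 2 ^ m then
      if 2 ^ m + j < k then prefRE (P j) (.char false)
      else prefRE (P j) (.plus (.char false) (.char true))
    else prefRE (P (j - 2 ^ m)) (.char true)
  have hg : ∀ j x, x ∈ (g j).matches' ↔ ∃ i b, x = P i ++ [b] ∧
      ((j < 2 ^ m ∧ i = j ∧ (b = false ∨ ¬ (2 ^ m + j < k))) ∨
        (¬ j < 2 ^ m ∧ i = j - 2 ^ m ∧ b = true)) := by
    intro j x
    have hch : ∀ (b : Bool) (y : List Bool),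
      y ∈ (RegularExpression.char b).matches' ↔ y = [b] := fun b y => Iff.rfl
    have hpl : ∀ (y : List Bool),
      y ∈ (RegularExpression.plus (.char false) (.char true)).matches' ↔
        y = [false] ∨ y = [true] := fun y => Iff.rfl
    by_cases h1 : j < 2 ^ m
    · by_cases h2 : 2 ^ m + j < k
      · simp only [g, if_true, if_false, h1, h2, mem_prefRE, hch]
        simp
      · simp only [g, if_true, if_false, h1, h2, mem_prefRE, hpl]
        simp
    · simp only [g, if_true, if_false, h1, mem_prefRE, hch]
      simp
  refine ⟨fun a => g (e a), ?_, ?_, ?_, ?_, ?_⟩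
  · intro a
    have := (e a).isLt
    by_cases h1 : (e a : ℕ) < 2 ^ m
    · by_cases h2 : 2 ^ m + (e a : ℕ) < k
      · simp [g, h1, h2, symCount_prefRE, symCount, hP1]; omega
      · have : m ≠ 0 := by
          rintro rfl
          simp at *; omega
        simp [g, h1, h2, symCount_prefRE, symCount, hP1]; omega
    · simp [g, h1, symCount_prefRE, symCount, hP1]; omega
  · intro a x hx
    obtain ⟨i, b, rfl, -⟩ := (hg _ _).1 hx
    simp [hP1]
  · intro a b x hx hx'
    obtain ⟨i, s, rfl, h⟩ := (hg _ _).1 hx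
    obtain ⟨i', s', heq, h'⟩ := (hg _ _).1 hx'
    obtain ⟨h3, h4⟩ := List.append_inj heq (by simp [hP1])
    have h4 : s = s' := by simpa using h4
    subst h4
    have ha := (e a).isLt
    have hb := (e b).isLt
    have hii := hP2 i i' (by omega) (by omega) h3
    apply e.injective
    apply Fin.ext
    rcases h with ⟨h, rfl, h5⟩ | ⟨h, rfl, rfl⟩ <;> rcases h' with ⟨h', h6, h7⟩ | ⟨h', h6, h7⟩ <;> grind
  · intro a
    by_cases h1 : (e a : ℕ) < 2 ^ m
    · exact ⟨_, (hg _ _).2 ⟨_, false, rfl, Or.inl ⟨h1, rfl, Or.inl rfl⟩⟩⟩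
    · exact ⟨_, (hg _ _).2 ⟨_, true, rfl, Or.inr ⟨h1, rfl, rfl⟩⟩⟩
  · intro x hx
    obtain ⟨p, b, rfl⟩ : ∃ p b, x = p ++ [b] := by
      rcases List.eq_nil_or_concat x with rfl | ⟨p, b, h⟩
      · simp at hx
      · exact ⟨p, b, by simpa using h⟩
    obtain ⟨i, hi, rfl⟩ := hP3 p (by simpa using hx)
    by_cases h : b = true ∧ 2 ^ m + i < k
    · refine ⟨e.symm ⟨2 ^ m + i, h.2⟩, (hg _ _).2 ⟨i, b, rfl, Or.inr ?_⟩⟩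
      simp [h.1]
    · refine ⟨e.symm ⟨i, by omega⟩, (hg _ _).2 ⟨i, b, rfl, Or.inl ?_⟩⟩
      simp only [Equiv.apply_symm_apply]
      refine ⟨hi, trivial, ?_⟩
      cases b
      · exact Or.inl rfl
      · exact Or.inr fun hlast => h ⟨rfl, hlast⟩

/-- Binarization of a regular expression: for an alphabet of size `k ≥ 2` and `h = ⌈log₂ k⌉`,
there is a regular expression over a two-letter alphabet with at most `(2h - 1) * n` input
symbols whose universal lengths are exactly `h * ℓ` for universal lengths `ℓ` of `r`;
consequently the minimal universality lengths are related by the factor `h`. -/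
theorem regex_binarization (k n : ℕ) (hk : 2 ≤ k)
    (σ : Type) [Fintype σ] (hσ : Fintype.card σ = k)
    (r : RegularExpression σ) (hr : symCount r = n) :
    ∃ r' : RegularExpression Bool,
      symCount r' ≤ (2 * Nat.clog 2 k - 1) * n ∧
      (∀ ℓ' : ℕ, IsUnivLength r'.matches' ℓ' ↔
          ∃ ℓ : ℕ, IsUnivLength r.matches' ℓ ∧ ℓ' = Nat.clog 2 k * ℓ) ∧
      ((∃ ℓ : ℕ, IsUnivLength r.matches' ℓ) →
        ((∃ ℓ' : ℕ, IsUnivLength r'.matches' ℓ') ∧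
          sInf {ℓ' : ℕ | IsUnivLength r'.matches' ℓ'} =
            Nat.clog 2 k * sInf {ℓ : ℕ | IsUnivLength r.matches' ℓ})) := by
  obtain ⟨c, hc, hl, hd, hn, hs⟩ := exists_codes k hk σ hσ
  have key : ∀ ℓ' : ℕ, IsUnivLength (substRE c r).matches' ℓ' ↔
      ∃ ℓ : ℕ, IsUnivLength r.matches' ℓ ∧ ℓ' = Nat.clog 2 k * ℓ := by
    intro ℓ'
    constructor
    · intro hU
      obtain ⟨u, hu, e⟩ := (mem_substRE c r _).1 (hU (List.replicate ℓ' false) (by simp))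
      have hlen := Enc.length hl e
      rw [List.length_replicate] at hlen
      refine ⟨u.length, ?_, hlen⟩
      intro v hv
      obtain ⟨w, ew⟩ := Enc.exists_code hn v
      have hw := Enc.length hl ew
      obtain ⟨v', hv', ev'⟩ := (mem_substRE c r _).1 (hU w (by rw [hw, hlen, hv]))
      have hpos : 0 < Nat.clog 2 k := Nat.clog_pos (by norm_num) hk
      have hw' := Enc.length hl ev'
      have : v.length = v'.length := Nat.eq_of_mul_eq_mul_left hpos (hw.symm.trans hw')
      rw [Enc.unique hl hd this ew ev']
      exact hv'
    · rintro ⟨ℓ, hU, rfl⟩ w hw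
      obtain ⟨u, hu, e⟩ := Enc.exists_decode hs ℓ w hw
      exact (mem_substRE c r w).2 ⟨u, hU u hu, e⟩
  refine ⟨substRE c r, ?_, key, ?_⟩
  · rw [← hr]
    exact symCount_substRE c _ hc r
  · intro hex
    have hmin : IsUnivLength r.matches' (sInf {ℓ : ℕ | IsUnivLength r.matches' ℓ}) :=
      Nat.sInf_mem (s := {ℓ : ℕ | IsUnivLength r.matches' ℓ}) hex
    have hmem := (key _).2 ⟨_, hmin, rfl⟩
    refine ⟨⟨_, hmem⟩, le_antisymm (Nat.sInf_le hmem) ?_⟩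
    have hmin' := Nat.sInf_mem (s := {ℓ' : ℕ | IsUnivLength (substRE c r).matches' ℓ'}) ⟨_, hmem⟩
    obtain ⟨ℓ, hℓ, heq⟩ := (key _).1 hmin'
    rw [heq]
    exact Nat.mul_le_mul_left _ (Nat.sInf_le hℓ)
end

section
/- Let M be a DFA with n states over a finite alphabet Σ. If there exists some ℓ ≥ 0 such that every word of length ℓ over Σ is accepted by M, then there exists such an ℓ with ℓ ≤ 2^(n²). -/
/-- If a DFA with `n` states has some universal length, then it has one of size at most
`2 ^ (n ^ 2)`. -/
theorem dfa_univ_length_le (σ Q : Type) [Fintype σ] [Fintype Q] (n : ℕ)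
    (hQ : Fintype.card Q = n) (M : DFA σ Q)
    (h : ∃ ℓ : ℕ, IsUnivLength M.accepts ℓ) :
    ∃ ℓ : ℕ, ℓ ≤ 2 ^ (n ^ 2) ∧ IsUnivLength M.accepts ℓ := by
  classical
  refine ⟨Nat.find h, ?_, Nat.find_spec h⟩
  have hmin := fun m => Nat.find_min (H := h) (m := m)
  have hl := Nat.find_spec h
  set l := Nat.find h
  by_contra hlt
  have hn : 2 ^ n ≤ 2 ^ (n ^ 2) :=
    Nat.pow_le_pow_right (by norm_num) (Nat.le_self_pow (by norm_num) n)
  -- the set of states reachable by words of length `i`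
  let R : Fin (2 ^ n + 1) → Set Q := fun i => {q | ∃ w : List σ, w.length = i ∧ M.eval w = q}
  obtain ⟨i, j, hij, hR⟩ : ∃ i j, i < j ∧ R i = R j := by
    obtain ⟨i, j, hne, hR⟩ := Fintype.exists_ne_map_eq_of_card_lt R (by simp [hQ])
    rcases lt_or_gt_of_ne hne with h1 | h1
    · exact ⟨i, j, h1, hR⟩
    · exact ⟨j, i, h1, hR.symm⟩
  have hij' : (i : ℕ) < j := hij
  have hj := j.2
  refine hmin (i + (l - j)) (by omega) ?_
  intro w hw
  have hmem : M.eval (w.take i) ∈ R i := ⟨w.take i, by simp; omega, rfl⟩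
  rw [hR] at hmem
  obtain ⟨u, hu, he⟩ := hmem
  have := hl (u ++ w.drop i) (by simp; omega)
  rw [DFA.mem_accepts] at this ⊢
  rw [← List.take_append_drop i w]
  unfold DFA.eval at *
  rw [DFA.evalFrom_of_append] at this ⊢
  rwa [← he]
end

section
/- For every ε > 0 there exists N such that for all n ≥ N the following holds: for every DFA M with n states over any finite nonempty alphabet Σ, if M has a universal length, then its minimal universality length is at most exp((1 + ε)·√(n·log n)). -/
namespace PNTaux
open MeasureTheory Set Filter Topology

noncomputable def tri (l t : ℝ) : ℝ := max 0 (1 - |t| / l)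

lemma tri_continuous (l : ℝ) : Continuous (tri l) := by
  unfold tri; fun_prop

lemma tri_nonneg (l t : ℝ) : 0 ≤ tri l t := le_max_left _ _

lemma tri_eq_zero {l t : ℝ} (hl : 0 < l) (h : l ≤ |t|) : tri l t = 0 := by
  unfold tri
  rw [max_eq_left]
  have : 1 ≤ |t| / l := by rwa [le_div_iff₀ hl, one_mul]
  linarith

lemma tri_compact {l : ℝ} (hl : 0 < l) : HasCompactSupport (tri l) := by
  refine HasCompactSupport.intro (isCompact_Icc (a := -l) (b := l)) fun t ht => ?_
  apply tri_eq_zero hl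
  by_contra! h
  exact ht (abs_le.1 h.le)

lemma tri_integrable {l : ℝ} (hl : 0 < l) : Integrable (tri l) :=
  (tri_continuous l).integrable_of_hasCompactSupport (tri_compact hl)

noncomputable def ker (x : ℝ) : ℝ := Real.sinc x ^ 2

lemma ker_nonneg (x : ℝ) : 0 ≤ ker x := sq_nonneg _
lemma ker_continuous : Continuous ker := by
  unfold ker; exact Real.continuous_sinc.pow 2

lemma ker_le (x : ℝ) : ker x ≤ 2 * (1 + x^2)⁻¹ := by
  have h1 : Real.sinc x ^ 2 ≤ 1 := by
    rw [sq_le_one_iff_abs_le_one]; exact Real.abs_sinc_le_one x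
  have h2 : x^2 * Real.sinc x ^2 ≤ 1 := by
    rcases eq_or_ne x 0 with rfl | h
    · simp
    · rw [Real.sinc_of_ne_zero h, ← mul_pow, mul_div_cancel₀ _ h]
      exact Real.sin_sq_le_one x
  unfold ker
  rw [← div_eq_mul_inv, le_div_iff₀ (by positivity)]
  linarith

lemma ker_integrable : Integrable ker := by
  refine Integrable.mono' (integrable_inv_one_add_sq.const_mul 2)
    ker_continuous.aestronglyMeasurable (Eventually.of_forall fun x => ?_)
  rw [Real.norm_of_nonneg (ker_nonneg x)]
  exact ker_le x

lemma ker_integral_pos : 0 < ∫ x, ker x := by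
  refine integral_pos_of_integrable_nonneg_nonzero (x := 0) ker_continuous ker_integrable
    ker_nonneg ?_
  simp [ker]

lemma tri_fourier {l : ℝ} (hl : 0 < l) (u : ℝ) :
    ∫ t, (tri l t : ℂ) * Complex.exp (Complex.I * t * u) = ((l * ker (l * u / 2) : ℝ) : ℂ) := by
  have h1 : ∫ t, (tri l t : ℂ) * Complex.exp (Complex.I * t * u)
      = ∫ t in (-l)..l, (tri l t : ℂ) * Complex.exp (Complex.I * t * u) := by
    rw [intervalIntegral.integral_of_le (by linarith), setIntegral_eq_integral_of_forall_compl_eq_zero]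
    intro t ht
    rw [tri_eq_zero hl]; · simp
    by_contra! h
    rw [abs_lt] at h
    exact ht ⟨h.1, h.2.le⟩
  have hc : Continuous fun t : ℝ => (tri l t : ℂ) * Complex.exp (Complex.I * t * u) := by
    have := tri_continuous l
    fun_prop
  rw [h1, ← intervalIntegral.integral_add_adjacent_intervals (b := 0)
    (hc.intervalIntegrable _ _) (hc.intervalIntegrable _ _)]
  have hlc : (l:ℂ) ≠ 0 := by exact_mod_cast hl.ne'
  have e1 : ∫ t in (-l)..0, (tri l t : ℂ) * Complex.exp (Complex.I * t * u)
      = ∫ t in (-l)..0, (1 + t / l : ℂ) * Complex.exp (Complex.I * t * u) := by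
    refine intervalIntegral.integral_congr fun t ht => ?_
    rw [uIcc_of_le (by linarith)] at ht
    simp only [tri, abs_of_nonpos ht.2]
    rw [max_eq_right]
    · push_cast; ring
    · have : -t / l ≤ 1 := by rw [div_le_one hl]; linarith [ht.1]
      linarith
  have e2 : ∫ t in (0)..l, (tri l t : ℂ) * Complex.exp (Complex.I * t * u)
      = ∫ t in (0)..l, (1 - t / l : ℂ) * Complex.exp (Complex.I * t * u) := by
    refine intervalIntegral.integral_congr fun t ht => ?_
    rw [uIcc_of_le (by linarith)] at ht
    simp only [tri, abs_of_nonneg ht.1]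
    rw [max_eq_right]
    · push_cast; ring
    · have : t / l ≤ 1 := by rw [div_le_one hl]; linarith [ht.2]
      linarith
  rw [e1, e2]
  rcases eq_or_ne u 0 with rfl | hu
  · have f1 : ∀ t ∈ uIcc (-l) 0, HasDerivAt (fun t : ℝ => ((t + t^2/(2*l) : ℝ) : ℂ))
        ((1 + t / l : ℂ) * Complex.exp (Complex.I * t * (0:ℝ))) t := by
      intro t _
      have : HasDerivAt (fun t : ℝ => t + t^2/(2*l)) (1 + t / l) t := by
        refine ((hasDerivAt_id t).add ((hasDerivAt_pow 2 t).div_const (2*l))).congr_deriv ?_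
        norm_num; field_simp
      convert this.ofReal_comp using 1
      simp
    have f2 : ∀ t ∈ uIcc 0 l, HasDerivAt (fun t : ℝ => ((t - t^2/(2*l) : ℝ) : ℂ))
        ((1 - t / l : ℂ) * Complex.exp (Complex.I * t * (0:ℝ))) t := by
      intro t _
      have : HasDerivAt (fun t : ℝ => t - t^2/(2*l)) (1 - t / l) t := by
        refine ((hasDerivAt_id t).sub ((hasDerivAt_pow 2 t).div_const (2*l))).congr_deriv ?_
        norm_num; field_simp
      convert this.ofReal_comp using 1
      simp
    rw [intervalIntegral.integral_eq_sub_of_hasDerivAt f1 (Continuous.intervalIntegrable (by fun_prop) _ _),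
      intervalIntegral.integral_eq_sub_of_hasDerivAt f2 (Continuous.intervalIntegrable (by fun_prop) _ _)]
    simp [ker]
    field_simp
    ring
  · have huc : (u:ℂ) ≠ 0 := by exact_mod_cast hu
    have hE : ∀ t : ℝ, HasDerivAt (fun t : ℝ => Complex.exp (Complex.I * t * u))
        (Complex.exp (Complex.I * t * u) * (Complex.I * u)) t := by
      intro t
      have h0 : HasDerivAt (fun z : ℂ => Complex.I * z * u) (Complex.I * u) t := by
        simpa using ((hasDerivAt_id (t:ℂ)).const_mul Complex.I).mul_const (u:ℂ)
      exact h0.cexp.comp_ofReal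
    have hI : ∀ t : ℝ, HasDerivAt (fun t : ℝ => (t : ℂ)) 1 t := fun t => by
      simpa using (hasDerivAt_id t).ofReal_comp
    have key : ∀ c t : ℝ, HasDerivAt (fun t : ℝ => (1 + c * t : ℂ) * Complex.exp (Complex.I * t * u) / (Complex.I * u)
        + c * Complex.exp (Complex.I * t * u) / u ^ 2) ((1 + c * t : ℂ) * Complex.exp (Complex.I * t * u)) t := by
      intro c t
      have g1 : HasDerivAt (fun t : ℝ => (1 + c * t : ℂ)) (c:ℂ) t := by
        simpa using ((hI t).const_mul (c:ℂ)).const_add 1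
      refine (((g1.mul (hE t)).div_const (Complex.I * u)).add
        (((hE t).const_mul (c:ℂ)).div_const ((u:ℂ)^2))).congr_deriv ?_
      have hI2 := Complex.I_sq
      field_simp
      linear_combination (c:ℂ) * hI2
    have f1 := intervalIntegral.integral_eq_sub_of_hasDerivAt (a := -l) (b := 0) (fun t _ => key (1/l) t) (Continuous.intervalIntegrable (by fun_prop) _ _)
    have f2 := intervalIntegral.integral_eq_sub_of_hasDerivAt (a := 0) (b := l) (fun t _ => key (-1/l) t) (Continuous.intervalIntegrable (by fun_prop) _ _)
    have g1 : ∫ t in (-l)..0, (1 + t / l : ℂ) * Complex.exp (Complex.I * t * u) = ∫ t in (-l)..0, (1 + ((1/l:ℝ):ℂ) * t : ℂ) * Complex.exp (Complex.I * t * u) := by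
      congr 1; ext t; push_cast; ring
    have g2 : ∫ t in (0)..l, (1 - t / l : ℂ) * Complex.exp (Complex.I * t * u) = ∫ t in (0)..l, (1 + ((-1/l:ℝ):ℂ) * t : ℂ) * Complex.exp (Complex.I * t * u) := by
      congr 1; ext t; push_cast; ring
    rw [g1, g2, f1, f2]
    have hk : l * ker (l * u / 2) = 2 * (1 - Real.cos (l*u)) / (l * u^2) := by
      unfold ker
      rw [Real.sinc_of_ne_zero (by positivity), div_pow, Real.sin_sq_eq_half_sub]
      field_simp
    have hcos : (Complex.exp (Complex.I * l * u) + Complex.exp (Complex.I * (-l:ℝ) * u)) = 2 * (Real.cos (l*u) : ℂ) := by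
      rw [Complex.ofReal_cos, Complex.two_cos]
      push_cast
      ring_nf
    rw [hk]
    push_cast at hcos ⊢
    field_simp
    simp
    ring_nf at hcos ⊢
    linear_combination (-Complex.I) * hcos


lemma swap_integral (b : ℝ → ℝ) (hb : Measurable b) (Cb : ℝ) (hCb : ∀ v, |b v| ≤ Cb)
    {l : ℝ} (hl : 0 < l) {η : ℝ} (hη : 0 < η) (w : ℝ) :
    ∫ t, (tri l t : ℂ) * Complex.exp (Complex.I * t * w) *
      (∫ v in Ioi (0:ℝ), (b v : ℂ) * Complex.exp (-((1 + η + Complex.I * t : ℂ) - 1) * v))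
    = ∫ v in Ioi (0:ℝ), (b v : ℂ) * Complex.exp (-η * v) * ((l * ker (l * (w - v) / 2) : ℝ) : ℂ) := by
  have hF : ∀ t v : ℝ, (tri l t : ℂ) * Complex.exp (Complex.I * t * w) *
      ((b v : ℂ) * Complex.exp (-((1 + η + Complex.I * t : ℂ) - 1) * v)) =
      ((b v : ℂ) * Complex.exp (-η * v)) * ((tri l t : ℂ) * Complex.exp (Complex.I * t * ((w - v : ℝ) : ℂ))) := by
    intro t v
    have : Complex.exp (Complex.I * t * w) * Complex.exp (-((1 + η + Complex.I * t : ℂ) - 1) * v)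
      = Complex.exp (-η * v) * Complex.exp (Complex.I * t * ((w - v : ℝ) : ℂ)) := by
      rw [← Complex.exp_add, ← Complex.exp_add]; push_cast; ring_nf
    linear_combination ((tri l t : ℂ) * b v) * this
  simp_rw [← integral_const_mul]
  rw [integral_integral_swap]
  · refine setIntegral_congr_fun measurableSet_Ioi fun v _ => ?_
    simp_rw [hF]
    rw [integral_const_mul, tri_fourier hl]
  · have hexp : IntegrableOn (fun v : ℝ => Real.exp (-η * v)) (Ioi 0) :=
      integrableOn_exp_mul_Ioi (by linarith) 0
    have h1 : Integrable (fun z : ℝ × ℝ => tri l z.1 * (Cb * Real.exp (-η * z.2)))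
        (volume.prod (volume.restrict (Ioi 0))) :=
      (tri_integrable hl).mul_prod (hexp.const_mul Cb)
    refine h1.mono' ?_ (Eventually.of_forall fun z => ?_)
    · have := (tri_continuous l).measurable
      apply Measurable.aestronglyMeasurable
      simp only [Function.uncurry_def]
      fun_prop
    · simp only [Function.uncurry_def, norm_mul, Complex.norm_real, Complex.norm_exp]
      simp only [Real.norm_eq_abs, abs_of_nonneg (tri_nonneg l _)]
      have e1 : (Complex.I * z.1 * w).re = 0 := by simp
      have e2 : (-((1 + η + Complex.I * z.1 : ℂ) - 1) * z.2).re = -η * z.2 := by simp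
      rw [e1, e2, Real.exp_zero, mul_one]
      have := hCb z.2
      have := tri_nonneg l z.1
      gcongr

lemma ker_scaled_integrable {l : ℝ} (hl : 0 < l) (w : ℝ) :
    Integrable (fun v => l * ker (l * (w - v) / 2)) := by
  have h1 : Integrable (fun v => ker ((l / 2) * v)) := ker_integrable.comp_mul_left' (by positivity)
  have h2 := (h1.comp_sub_left w).const_mul l
  refine h2.congr (Eventually.of_forall fun v => ?_)
  simp only; congr 2; ring

lemma limit_identity (b : ℝ → ℝ) (hb : Measurable b) (Cb : ℝ) (hCb : ∀ v, |b v| ≤ Cb)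
    (H : ℂ → ℂ) (hH : ContinuousOn H {s | 1 ≤ s.re})
    (hrep : ∀ s : ℂ, 1 < s.re →
      H s = ∫ v in Ioi (0:ℝ), (b v : ℂ) * Complex.exp (-(s - 1) * v))
    {l : ℝ} (hl : 0 < l) (w : ℝ) :
    ∫ t, (tri l t : ℂ) * Complex.exp (Complex.I * t * w) * H (1 + Complex.I * t)
    = ∫ v in Ioi (0:ℝ), (b v : ℂ) * ((l * ker (l * (w - v) / 2) : ℝ) : ℂ) := by
  have hev : ∀ᶠ η : ℝ in 𝓝[>] 0, 0 < η ∧ η ≤ 1 :=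
    (eventually_mem_nhdsWithin (a := (0:ℝ)) (s := Ioi 0)).and
      (nhdsWithin_le_nhds (eventually_le_nhds one_pos))
  have hL : Tendsto (fun η : ℝ => ∫ t, (tri l t : ℂ) * Complex.exp (Complex.I * t * w) * H (1 + η + Complex.I * t))
      (𝓝[>] 0) (𝓝 (∫ t, (tri l t : ℂ) * Complex.exp (Complex.I * t * w) * H (1 + Complex.I * t))) := by
    have hcomp : IsCompact ((fun p : ℝ × ℝ => (1 + p.1 + Complex.I * p.2 : ℂ)) '' (Icc 0 1 ×ˢ Icc (-l) l)) :=
      (isCompact_Icc.prod isCompact_Icc).image (by fun_prop)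
    obtain ⟨B, hB⟩ := hcomp.exists_bound_of_continuousOn (hH.mono (by
      rintro _ ⟨p, hp, rfl⟩
      have := hp.1.1
      simpa using this))
    refine tendsto_integral_filter_of_dominated_convergence (fun t => tri l t * B) ?_ ?_ ?_ ?_
    · filter_upwards [hev] with η hη
      have h1 : Continuous fun t : ℝ => H (1 + η + Complex.I * t) :=
        hH.comp_continuous (by fun_prop) (fun t => by simpa using hη.1.le)
      have := tri_continuous l
      exact (Continuous.mul (by fun_prop) h1).aestronglyMeasurable
    · filter_upwards [hev] with η hη
      refine Eventually.of_forall fun t => ?_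
      simp only [norm_mul, Complex.norm_real, Complex.norm_exp]
      simp only [Real.norm_eq_abs, abs_of_nonneg (tri_nonneg l _)]
      have e1 : (Complex.I * t * w).re = 0 := by simp
      rw [e1, Real.exp_zero, mul_one]
      by_cases ht : |t| < l
      · have := hB (1 + η + Complex.I * t) ⟨(η, t), ⟨⟨hη.1.le, hη.2⟩, abs_le.1 ht.le⟩, rfl⟩
        have := tri_nonneg l t
        gcongr
      · rw [tri_eq_zero hl (not_lt.1 ht)]; simp
    · exact (tri_integrable hl).mul_const B
    · refine Eventually.of_forall fun t => ?_
      refine Tendsto.const_mul _ ?_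
      have h1 : ContinuousWithinAt H {s | 1 ≤ s.re} (1 + Complex.I * t) := hH _ (by simp)
      refine h1.tendsto.comp (tendsto_nhdsWithin_iff.2 ⟨?_, ?_⟩)
      · have : Continuous fun η : ℝ => (1 + η + Complex.I * t : ℂ) := by fun_prop
        have h2 := this.tendsto 0
        simp only [Complex.ofReal_zero, add_zero] at h2
        exact h2.mono_left nhdsWithin_le_nhds
      · filter_upwards [hev] with η hη
        simpa using hη.1.le
  have hR : Tendsto (fun η : ℝ => ∫ v in Ioi (0:ℝ), (b v : ℂ) * Complex.exp (-η * v) * ((l * ker (l * (w - v) / 2) : ℝ) : ℂ))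
      (𝓝[>] 0) (𝓝 (∫ v in Ioi (0:ℝ), (b v : ℂ) * ((l * ker (l * (w - v) / 2) : ℝ) : ℂ))) := by
    have hkc := ker_continuous
    have hkm := ker_continuous.measurable
    refine tendsto_integral_filter_of_dominated_convergence (fun v => Cb * (l * ker (l * (w - v) / 2))) ?_ ?_ ?_ ?_
    · filter_upwards [hev] with η hη
      apply Measurable.aestronglyMeasurable
      fun_prop
    · filter_upwards [hev] with η hη
      refine (ae_restrict_mem measurableSet_Ioi).mono fun v hv => ?_
      rw [norm_mul, norm_mul, Complex.norm_real, Complex.norm_real, Complex.norm_exp]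
      have hk0 := ker_nonneg (l * (w - v) / 2)
      have e1 : (-η * v : ℂ).re = -η * v := by simp
      rw [e1, Real.norm_of_nonneg (mul_nonneg hl.le hk0)]
      have : Real.exp (-η * v) ≤ 1 := Real.exp_le_one_iff.2 (by have := mul_pos hη.1 hv; linarith)
      have h3 := hCb v
      have h4 : 0 ≤ Cb := (abs_nonneg _).trans h3
      rw [Real.norm_eq_abs]
      calc |b v| * Real.exp (-η * v) * (l * ker (l * (w - v) / 2)) ≤ Cb * 1 * (l * ker (l * (w - v) / 2)) := by gcongr
        _ = _ := by ring
    · exact ((ker_scaled_integrable hl w).const_mul Cb).integrableOn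
    · refine Eventually.of_forall fun v => ?_
      have : Continuous fun η : ℝ => (b v : ℂ) * Complex.exp (-η * v) * ((l * ker (l * (w - v) / 2) : ℝ) : ℂ) := by fun_prop
      have h2 := this.tendsto 0
      simp only [Complex.ofReal_zero, neg_zero, zero_mul, Complex.exp_zero, mul_one] at h2
      exact h2.mono_left nhdsWithin_le_nhds
  refine tendsto_nhds_unique hL (hR.congr' ?_)
  filter_upwards [hev] with η hη
  rw [← swap_integral b hb Cb hCb hl hη.1 w]
  congr 1; ext t
  rw [hrep]
  simpa using hη.1

lemma tauber_limit (b : ℝ → ℝ) (hb : Measurable b) (Cb : ℝ) (hCb : ∀ v, |b v| ≤ Cb)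
    (H : ℂ → ℂ) (hH : ContinuousOn H {s | 1 ≤ s.re})
    (hrep : ∀ s : ℂ, 1 < s.re →
      H s = ∫ v in Ioi (0:ℝ), (b v : ℂ) * Complex.exp (-(s - 1) * v))
    {l : ℝ} (hl : 0 < l) :
    Tendsto (fun w : ℝ => ∫ v in Ioi (0:ℝ), b v * (l * ker (l * (w - v) / 2))) atTop (𝓝 0) := by
  have h1 := Real.tendsto_integral_exp_smul_cocompact (fun t : ℝ => (tri l t : ℂ) * H (1 + Complex.I * t))
  have h2 : Tendsto (fun w : ℝ => -(w / (2 * Real.pi))) atTop (cocompact ℝ) := by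
    have : Tendsto (fun w : ℝ => -(w / (2 * Real.pi))) atTop atBot :=
      tendsto_neg_atTop_atBot.comp (tendsto_id.atTop_div_const (by positivity))
    exact this.mono_right atBot_le_cocompact
  have h3 := h1.comp h2
  have h4 : Tendsto (fun w : ℝ => ∫ v in Ioi (0:ℝ), (b v : ℂ) * ((l * ker (l * (w - v) / 2) : ℝ) : ℂ)) atTop (𝓝 0) := by
    refine h3.congr fun w => ?_
    rw [← limit_identity b hb Cb hCb H hH hrep hl w]
    simp only [Function.comp]
    congr 1; ext t
    rw [Circle.smul_def, Real.fourierChar_apply]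
    have : Complex.exp (↑(2 * Real.pi * -(t * -(w / (2 * Real.pi)))) * Complex.I) = Complex.exp (Complex.I * t * w) := by
      congr 1
      push_cast
      have : (Real.pi : ℂ) ≠ 0 := by exact_mod_cast Real.pi_ne_zero
      field_simp
    rw [this, smul_eq_mul]; ring
  have h5 := (Complex.continuous_re.tendsto 0).comp h4
  simp only [Complex.zero_re] at h5
  refine h5.congr fun w => ?_
  simp only [Function.comp, ← Complex.ofReal_mul]
  rw [integral_complex_ofReal, Complex.ofReal_re]


noncomputable def bfun (v : ℝ) : ℝ := Chebyshev.psi (Real.exp v) * Real.exp (-v) - 1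

lemma bfun_measurable : Measurable bfun := by
  unfold bfun
  have := Chebyshev.psi_mono.measurable
  fun_prop

lemma bfun_bound (v : ℝ) : |bfun v| ≤ Real.log 4 + 4 := by
  have h1 := Chebyshev.psi_le_const_mul_self (Real.exp_pos v).le
  have h0 := Chebyshev.psi_nonneg (Real.exp v)
  have h2 : Chebyshev.psi (Real.exp v) * Real.exp (-v) ≤ Real.log 4 + 4 := by
    calc _ ≤ ((Real.log 4 + 4) * Real.exp v) * Real.exp (-v) := by gcongr
      _ = _ := by rw [mul_assoc, ← Real.exp_add]; simp
  have h3 : 0 ≤ Chebyshev.psi (Real.exp v) * Real.exp (-v) := by positivity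
  have h4 : 0 ≤ Real.log 4 := Real.log_nonneg (by norm_num)
  unfold bfun
  rw [abs_le]; constructor <;> linarith

lemma exp_integral_change (g : ℝ → ℂ) :
    ∫ x in Ioi (1:ℝ), g x = ∫ v in Ioi (0:ℝ), (Real.exp v : ℂ) * g (Real.exp v) := by
  have h := integral_image_eq_integral_abs_deriv_smul (s := Ioi (0:ℝ)) (f := Real.exp)
    (f' := Real.exp) measurableSet_Ioi
    (fun x _ => (Real.hasDerivAt_exp x).hasDerivWithinAt) Real.exp_injective.injOn g
  have him : Real.exp '' Ioi (0:ℝ) = Ioi 1 := by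
    ext y
    simp only [mem_image, mem_Ioi]
    constructor
    · rintro ⟨x, hx, rfl⟩
      exact Real.one_lt_exp_iff.2 hx
    · intro hy
      exact ⟨Real.log y, Real.log_pos hy, Real.exp_log (by linarith)⟩
  rw [him] at h
  rw [h]
  refine setIntegral_congr_fun measurableSet_Ioi fun v _ => ?_
  simp [abs_of_pos (Real.exp_pos v)]

lemma rep (s : ℂ) (hs : 1 < s.re) :
    LSeries (fun n => (ArithmeticFunction.vonMangoldt n : ℂ)) s / s - 1 / (s - 1)
      = ∫ v in Ioi (0:ℝ), (bfun v : ℂ) * Complex.exp (-(s - 1) * v) := by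
  have h1 := LSeries_eq_mul_integral_of_nonneg (fun n => ArithmeticFunction.vonMangoldt n)
    (r := 1) zero_le_one hs (by
      refine Asymptotics.IsBigO.of_bound (Real.log 4 + 4) (Eventually.of_forall fun n => ?_)
      have := Chebyshev.psi_le_const_mul_self (x := n) (by positivity)
      have h0 := Chebyshev.psi_nonneg (n:ℝ)
      have e : ∑ k ∈ Finset.Icc 1 n, ArithmeticFunction.vonMangoldt k = Chebyshev.psi n := by
        simp [Chebyshev.psi]; rfl
      rw [e]
      simpa [abs_of_nonneg h0] using this) (fun n => ArithmeticFunction.vonMangoldt_nonneg)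
  have hs0 : s ≠ 0 := by rintro rfl; simp at hs; linarith
  have hre : 0 < (s-1).re := by simpa using hs
  rw [h1, mul_div_cancel_left₀ _ hs0, exp_integral_change]
  have h2 : 1 / (s - 1) = ∫ v in Ioi (0:ℝ), Complex.exp (-(s - 1) * v) := by
    rw [integral_exp_mul_complex_Ioi (by simpa using hs)]
    have hne : s - 1 ≠ 0 := by intro h; rw [h] at hre; simp at hre
    have hne' : -(s - 1) ≠ 0 := neg_ne_zero.2 hne
    simp only [Complex.ofReal_zero, mul_zero, Complex.exp_zero]
    field_simp
  have hInt1 : IntegrableOn (fun v : ℝ => Complex.exp (-(s - 1) * v)) (Ioi 0) :=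
    integrableOn_exp_mul_complex_Ioi (by simpa using hs) 0
  have hInt2 : IntegrableOn (fun v : ℝ => (bfun v : ℂ) * Complex.exp (-(s - 1) * v)) (Ioi 0) := by
    refine Integrable.bdd_mul (c := Real.log 4 + 4) hInt1 ?_ ?_
    · exact (Complex.measurable_ofReal.comp bfun_measurable).aestronglyMeasurable
    · exact Eventually.of_forall fun v => by simpa using bfun_bound v
  rw [h2, sub_eq_iff_eq_add, ← integral_add hInt2 hInt1]
  refine setIntegral_congr_fun measurableSet_Ioi fun v hv => ?_
  have e : ∑ k ∈ Finset.Icc 1 ⌊Real.exp v⌋₊, (ArithmeticFunction.vonMangoldt k : ℂ)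
      = Chebyshev.psi (Real.exp v) := by
    simp [Chebyshev.psi]; rfl
  simp only [e]
  have e2 : ((Real.exp v : ℝ) : ℂ) ^ (-(s+1)) = Complex.exp (-(s+1) * v) := by
    rw [Complex.cpow_def_of_ne_zero (by exact_mod_cast (Real.exp_pos v).ne'),
      ← Complex.ofReal_log (Real.exp_pos v).le, Real.log_exp, mul_comm]
  rw [e2]
  unfold bfun
  push_cast
  have e3 : Complex.exp (-(s-1) * v) = Complex.exp (-(s+1)*v) * Complex.exp v * Complex.exp v := by
    rw [← Complex.exp_add, ← Complex.exp_add]; ring_nf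
  have e4 : Complex.exp (-(v:ℂ)) * Complex.exp v = 1 := by
    rw [← Complex.exp_add]; simp
  rw [e3]
  linear_combination (-Chebyshev.psi (Real.exp v) * Complex.exp (-(s+1)*v) * Complex.exp v : ℂ) * e4

open ArithmeticFunction.vonMangoldt in
/-- continuous extension -/
lemma exists_H : ∃ H : ℂ → ℂ, ContinuousOn H {s | 1 ≤ s.re} ∧ ∀ s : ℂ, 1 < s.re →
    H s = ∫ v in Ioi (0:ℝ), (bfun v : ℂ) * Complex.exp (-(s - 1) * v) := by
  refine ⟨fun s => (LFunctionResidueClassAux (1 : ZMod 1) s - 1) / s, ?_, ?_⟩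
  · refine ContinuousOn.div ((continuousOn_LFunctionResidueClassAux _).sub continuousOn_const)
      continuousOn_id ?_
    rintro s hs rfl
    simp at hs; linarith
  · intro s hs
    rw [← rep s hs]
    have := eqOn_LFunctionResidueClassAux (q := 1) (a := 1) isUnit_one hs
    simp only at this ⊢
    rw [this]
    have e : (residueClass (1 : ZMod 1)) = fun n => ArithmeticFunction.vonMangoldt n := by
      ext n
      simp [residueClass, Subsingleton.elim (n : ZMod 1) 1]
    rw [e]
    have hs0 : s ≠ 0 := by rintro rfl; simp at hs; linarith
    have hs1 : s - 1 ≠ 0 := by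
      intro h; rw [sub_eq_zero] at h; rw [h] at hs; simp at hs
    simp only [Nat.totient_one]
    field_simp
    simp


lemma ker_scaled_integral {l : ℝ} (hl : 0 < l) (w : ℝ) :
    ∫ v, l * ker (l * (w - v) / 2) = 2 * ∫ x, ker x := by
  have h1 : (fun v => l * ker (l * (w - v) / 2)) = fun v => (fun y => l * ker ((l/2) * y)) (w - v) := by
    ext v; simp only; congr 2; ring
  rw [h1, integral_sub_left_eq_self (fun y => l * ker ((l/2) * y)), integral_const_mul,
    Measure.integral_comp_mul_left, smul_eq_mul, abs_of_pos (by positivity)]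
  field_simp

theorem psi_upper (ε : ℝ) (hε : 0 < ε) : ∃ X0 : ℝ, ∀ x ≥ X0, Chebyshev.psi x ≤ (1 + ε) * x := by
  set C := ∫ x, ker x with hC
  have hCpos : 0 < C := ker_integral_pos
  obtain ⟨H, hH, hrep⟩ := exists_H
  obtain ⟨δ, hδ0, hδ1, hδ⟩ : ∃ δ : ℝ, 0 < δ ∧ δ < 1 ∧ Real.exp (2 * δ) * (1 + δ) / (1 - δ) < 1 + ε := by
    have h1 : ContinuousAt (fun δ : ℝ => Real.exp (2 * δ) * (1 + δ) / (1 - δ)) 0 :=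
      ContinuousAt.div (by fun_prop) (by fun_prop) (by norm_num)
    have h2 := h1.tendsto
    simp only [mul_zero, Real.exp_zero, add_zero, sub_zero, mul_one, div_one] at h2
    have h3 := h2.eventually (gt_mem_nhds (show (1:ℝ) < 1 + ε by linarith))
    have h4 : ∀ᶠ δ : ℝ in 𝓝[>] 0, 0 < δ ∧ δ < 1 ∧ Real.exp (2 * δ) * (1 + δ) / (1 - δ) < 1 + ε := by
      filter_upwards [self_mem_nhdsWithin, nhdsWithin_le_nhds h3,
        nhdsWithin_le_nhds (gt_mem_nhds (zero_lt_one' ℝ))] with δ a b c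
      exact ⟨a, c, b⟩
    exact h4.exists
  obtain ⟨A, hA0, hA⟩ : ∃ A : ℝ, 0 < A ∧ (1 - δ) * C < ∫ x in (-A)..A, ker x := by
    have h1 := intervalIntegral_tendsto_integral ker_integrable tendsto_neg_atTop_atBot
      (tendsto_id (α := ℝ) (x := atTop))
    have h2 := h1.eventually (lt_mem_nhds (show (1 - δ) * C < ∫ x, ker x by rw [← hC]; nlinarith))
    exact ((eventually_gt_atTop 0).and h2).exists
  set l := 2 * A / δ with hldef
  have hl : 0 < l := by positivity
  have hT := tauber_limit bfun bfun_measurable _ bfun_bound H hH hrep hl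
  have hev := hT.eventually (gt_mem_nhds (show 0 < 2 * C * δ by positivity))
  obtain ⟨W, hW⟩ := (hev.and (eventually_gt_atTop δ)).exists_forall_of_atTop
  refine ⟨Real.exp W, fun x hx => ?_⟩
  have hx0 : 0 < x := (Real.exp_pos W).trans_le hx
  set w := Real.log x + δ with hw
  have hwW : W ≤ w := by
    have : W ≤ Real.log x := by rwa [Real.le_log_iff_exp_le hx0]
    linarith
  obtain ⟨hlt, hwδ⟩ := hW w hwW
  set K : ℝ → ℝ := fun v => l * ker (l * (w - v) / 2) with hK
  have hKint : Integrable K := ker_scaled_integrable hl w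
  have hK0 : ∀ v, 0 ≤ K v := fun v => mul_nonneg hl.le (ker_nonneg _)
  have hbK : Integrable (fun v => bfun v * K v) := by
    refine hKint.bdd_mul (c := Real.log 4 + 4) bfun_measurable.aestronglyMeasurable ?_
    exact Eventually.of_forall fun v => bfun_bound v
  have hBK : Integrable (fun v => (bfun v + 1) * K v) := by
    exact (hbK.add hKint).congr (Eventually.of_forall fun v => by simp [add_mul])
  have hB0 : ∀ v, 0 ≤ bfun v + 1 := fun v => by
    have := Chebyshev.psi_nonneg (Real.exp v)
    simp only [bfun, sub_add_cancel]; positivity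
  have up : ∫ v in Ioi (0:ℝ), (bfun v + 1) * K v ≤ 2 * C * (1 + δ) := by
    have e : ∫ v in Ioi (0:ℝ), (bfun v + 1) * K v = (∫ v in Ioi (0:ℝ), bfun v * K v) + ∫ v in Ioi (0:ℝ), K v := by
      rw [← integral_add hbK.integrableOn hKint.integrableOn]
      congr 1; ext v; ring
    have e2 : ∫ v in Ioi (0:ℝ), K v ≤ 2 * C := by
      rw [← ker_scaled_integral hl w]
      exact setIntegral_le_integral hKint (Eventually.of_forall hK0)
    rw [e]; linarith
  have lo : ∫ v in Ioc (w - δ) (w + δ), (Chebyshev.psi x / x * Real.exp (-(2 * δ))) * K v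
      ≤ ∫ v in Ioi (0:ℝ), (bfun v + 1) * K v := by
    calc _ ≤ ∫ v in Ioc (w - δ) (w + δ), (bfun v + 1) * K v := by
          refine setIntegral_mono_on (hKint.const_mul _).integrableOn hBK.integrableOn
            measurableSet_Ioc fun v hv => ?_
          refine mul_le_mul_of_nonneg_right ?_ (hK0 v)
          simp only [bfun, sub_add_cancel]
          have h1 : x ≤ Real.exp v := by
            rw [← Real.log_le_iff_le_exp hx0]; linarith [hv.1]
          have h2 := Chebyshev.psi_mono h1
          have h3 : Real.exp (-(2*δ)) / x ≤ Real.exp (-v) := by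
            rw [div_eq_mul_inv, ← Real.exp_log hx0, ← Real.exp_neg, ← Real.exp_add, Real.exp_le_exp]
            linarith [hv.2]
          have h4 := Chebyshev.psi_nonneg x
          have h5 := Chebyshev.psi_nonneg (Real.exp v)
          calc _ = Chebyshev.psi x * (Real.exp (-(2*δ)) / x) := by ring
            _ ≤ _ := by gcongr
      _ ≤ _ := by
          refine setIntegral_mono_set hBK.integrableOn
            (Eventually.of_forall fun v => mul_nonneg (hB0 v) (hK0 v)) ?_
          refine Eventually.of_forall fun v hv => ?_
          exact lt_of_le_of_lt (by linarith) hv.1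
  have hin : ∫ v in Ioc (w - δ) (w + δ), K v = 2 * ∫ x in (-A)..A, ker x := by
    rw [← intervalIntegral.integral_of_le (by linarith)]
    have h1 : K = fun v => l * ker (l * w / 2 - (l / 2) * v) := by
      ext v; simp only [hK]; congr 2; ring
    rw [h1, intervalIntegral.integral_const_mul,
      intervalIntegral.integral_comp_sub_mul _ (by positivity)]
    have e1 : l * w / 2 - l / 2 * (w + δ) = -A := by rw [hldef]; field_simp; ring
    have e2 : l * w / 2 - l / 2 * (w - δ) = A := by rw [hldef]; field_simp; ring
    rw [e1, e2, smul_eq_mul]; field_simp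
  rw [integral_const_mul, hin] at lo
  have hq0 : 0 ≤ Chebyshev.psi x / x := div_nonneg (Chebyshev.psi_nonneg x) hx0.le
  have h6 : (Chebyshev.psi x / x) * Real.exp (-(2*δ)) * (2 * ((1 - δ) * C)) ≤ 2 * C * (1 + δ) := by
    refine le_trans ?_ (lo.trans up)
    gcongr
  have h7 : (Chebyshev.psi x / x) ≤ Real.exp (2 * δ) * (1 + δ) / (1 - δ) := by
    rw [le_div_iff₀ (by linarith)]
    rw [Real.exp_neg] at h6
    have hE := Real.exp_pos (2*δ)
    have h8 : (Chebyshev.psi x / x) * (Real.exp (2*δ))⁻¹ * (1 - δ) ≤ 1 + δ := by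
      by_contra! h
      nlinarith
    calc _ = Real.exp (2*δ) * ((Chebyshev.psi x / x) * (Real.exp (2*δ))⁻¹ * (1 - δ)) := by
          field_simp
      _ ≤ _ := by gcongr
  have h9 := h7.trans hδ.le
  rwa [div_le_iff₀ hx0] at h9

end PNTaux

namespace LandauAux

/-- sum of the exact prime powers dividing `m`. -/
def ppSum (m : ℕ) : ℕ := ∑ p ∈ m.primeFactors, p ^ m.factorization p

lemma sum_le_prod_of_two_le {ι : Type*} (s : Finset ι) (f : ι → ℕ) (h : ∀ i ∈ s, 2 ≤ f i) :
    ∑ i ∈ s, f i ≤ ∏ i ∈ s, f i := by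
  classical
  induction s using Finset.induction_on with
  | empty => simp
  | insert a s ha ih =>
    rw [Finset.sum_insert ha, Finset.prod_insert ha]
    have ih' := ih fun i hi => h i (Finset.mem_insert_of_mem hi)
    have h2 := h a (Finset.mem_insert_self _ _)
    rcases s.eq_empty_or_nonempty with rfl | ⟨b, hb⟩
    · simp
    · have h3 : 2 ≤ ∑ i ∈ s, f i :=
        (h b (Finset.mem_insert_of_mem hb)).trans (Finset.single_le_sum (fun _ _ => Nat.zero_le _) hb)
      nlinarith

lemma ppSum_le {m : ℕ} (hm : m ≠ 0) : ppSum m ≤ m := by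
  conv_rhs => rw [← Nat.prod_factorization_pow_eq_self hm]
  rw [Finsupp.prod, Nat.support_factorization]
  refine sum_le_prod_of_two_le _ _ fun p hp => ?_
  have hpp := Nat.prime_of_mem_primeFactors hp
  have h1 : m.factorization p ≠ 0 := by
    rw [← Nat.support_factorization] at hp
    exact Finsupp.mem_support_iff.1 hp
  exact hpp.two_le.trans (Nat.le_self_pow h1 p)

lemma ppSum_lcm {a b : ℕ} (ha : a ≠ 0) (hb : b ≠ 0) : ppSum (a.lcm b) ≤ ppSum a + ppSum b := by
  have h1 : (a.lcm b).primeFactors = a.primeFactors ∪ b.primeFactors := by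
    ext p
    simp only [Finset.mem_union, Nat.mem_primeFactors]
    constructor
    · rintro ⟨hp, hd, _⟩
      have := hd.trans (Nat.lcm_dvd_mul a b)
      rcases hp.dvd_mul.1 this with h | h
      · exact Or.inl ⟨hp, h, ha⟩
      · exact Or.inr ⟨hp, h, hb⟩
    · rintro (⟨hp, hd, _⟩ | ⟨hp, hd, _⟩)
      · exact ⟨hp, hd.trans (Nat.dvd_lcm_left a b), Nat.lcm_ne_zero ha hb⟩
      · exact ⟨hp, hd.trans (Nat.dvd_lcm_right a b), Nat.lcm_ne_zero ha hb⟩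
  unfold ppSum
  rw [h1]
  have key : ∀ p ∈ a.primeFactors ∪ b.primeFactors, p ^ (a.lcm b).factorization p ≤
      (if p ∈ a.primeFactors then p ^ a.factorization p else 0) +
      (if p ∈ b.primeFactors then p ^ b.factorization p else 0) := by
    intro p hp
    rw [Nat.factorization_lcm ha hb, Finsupp.sup_apply]
    by_cases h1 : p ∈ a.primeFactors <;> by_cases h2 : p ∈ b.primeFactors
    · rw [if_pos h1, if_pos h2]
      rcases le_total (a.factorization p) (b.factorization p) with h | h
      · rw [sup_eq_right.2 h]; omega
      · rw [sup_eq_left.2 h]; omega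
    · rw [if_pos h1, if_neg h2]
      have : b.factorization p = 0 := by
        rw [← Nat.support_factorization] at h2; exact Finsupp.notMem_support_iff.1 h2
      simp [this]
    · rw [if_neg h1, if_pos h2]
      have : a.factorization p = 0 := by
        rw [← Nat.support_factorization] at h1; exact Finsupp.notMem_support_iff.1 h1
      simp [this]
    · simp_all
  refine (Finset.sum_le_sum key).trans ?_
  rw [Finset.sum_add_distrib]
  simp only [Finset.sum_ite_mem]
  rw [Finset.inter_eq_right.2 Finset.subset_union_left, Finset.inter_eq_right.2 Finset.subset_union_right]

lemma ppSum_finset_lcm {ι : Type*} (s : Finset ι) (f : ι → ℕ) (hf : ∀ i ∈ s, f i ≠ 0) :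
    s.lcm f ≠ 0 ∧ ppSum (s.lcm f) ≤ ∑ i ∈ s, f i := by
  classical
  induction s using Finset.induction_on with
  | empty => simp [ppSum]
  | insert a s ha ih =>
    obtain ⟨i1, i2⟩ := ih fun i hi => hf i (Finset.mem_insert_of_mem hi)
    have h2 := hf a (Finset.mem_insert_self _ _)
    rw [Finset.lcm_insert, Finset.sum_insert ha]
    refine ⟨Nat.lcm_ne_zero h2 i1, (ppSum_lcm h2 i1).trans ?_⟩
    have := ppSum_le h2
    omega

lemma log_eq_sum {m : ℕ} (hm : m ≠ 0) :
    Real.log m = ∑ p ∈ m.primeFactors, Real.log ((p ^ m.factorization p : ℕ) : ℝ) := by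
  rw [← Real.log_prod, ← Nat.cast_prod]
  · congr 2
    conv_lhs => rw [← Nat.prod_factorization_pow_eq_self hm]
    rw [Finsupp.prod, Nat.support_factorization]
  · intro p hp
    have := (Nat.prime_of_mem_primeFactors hp).pos
    positivity

/-- Lagrangian bound. -/
lemma log_le_main {m x : ℕ} (hm : m ≠ 0) (hx : 3 ≤ x) :
    Real.log m ≤ Real.log x / x * ppSum m
      + ∑ p ∈ (Finset.range x) with p.Prime, Real.log p * (1 - p / x)
      + (Nat.sqrt x + 1) * Real.log x := by
  have hx0 : (0:ℝ) < x := by positivity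
  have hlx : 0 < Real.log x := Real.log_pos (by exact_mod_cast (by omega : 1 < x))
  have key : ∀ p ∈ m.primeFactors, Real.log ((p ^ m.factorization p : ℕ) : ℝ) ≤
      Real.log x / x * ((p ^ m.factorization p : ℕ) : ℝ)
      + (if p < x then Real.log p * (1 - p / x) else 0)
      + (if p ≤ Nat.sqrt x then Real.log x else 0) := by
    intro p hp
    have hpp := Nat.prime_of_mem_primeFactors hp
    have h1 : 1 ≤ m.factorization p := by
      rw [← Nat.support_factorization] at hp
      exact Nat.one_le_iff_ne_zero.2 (Finsupp.mem_support_iff.1 hp)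
    have hlp : 0 ≤ Real.log p := Real.log_nonneg (by exact_mod_cast hpp.one_lt.le)
    have t1 : 0 ≤ (if p < x then Real.log p * (1 - p / x) else 0) := by
      split_ifs with h
      · have : (p:ℝ) / x ≤ 1 := by rw [div_le_one hx0]; exact_mod_cast h.le
        exact mul_nonneg hlp (by linarith)
      · exact le_rfl
    have t2 : 0 ≤ (if p ≤ Nat.sqrt x then Real.log x else 0) := by
      split_ifs <;> linarith
    set q := p ^ m.factorization p with hq
    have hq0 : 0 < q := pow_pos hpp.pos _
    have hq0' : (0:ℝ) < q := by exact_mod_cast hq0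
    rcases le_or_gt x q with h | h
    · -- q ≥ x
      have he : Real.exp 1 ≤ x := Real.exp_one_lt_three.le.trans (by exact_mod_cast hx)
      have := Real.log_div_self_antitoneOn (Set.mem_ofPred.2 he)
        (Set.mem_ofPred.2 (he.trans (by exact_mod_cast h : (x:ℝ) ≤ q))) (by exact_mod_cast h : (x:ℝ) ≤ q)
      simp only at this
      rw [div_le_iff₀ hq0'] at this
      linarith
    · rcases eq_or_lt_of_le h1 with h2 | h2
      · have hqp : q = p := by rw [hq, ← h2, pow_one]
        rw [hqp] at h ⊢
        rw [if_pos h]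
        have hpx : Real.log p ≤ Real.log x :=
          Real.log_le_log (by exact_mod_cast hpp.pos) (by exact_mod_cast h.le)
        have h3 : (0:ℝ) ≤ (p:ℝ)/x := by positivity
        have h4 : Real.log x / x * p = Real.log x * (p / x) := by ring
        rw [h4]
        nlinarith
      · have h3 : p ≤ Nat.sqrt x := by
          rw [Nat.le_sqrt']
          exact (Nat.pow_le_pow_right hpp.pos h2).trans h.le
        rw [if_pos h3]
        have hpx : Real.log q ≤ Real.log x :=
          Real.log_le_log hq0' (by exact_mod_cast h.le)
        have : 0 ≤ Real.log x / x * q := by positivity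
        linarith
  rw [log_eq_sum hm]
  refine (Finset.sum_le_sum key).trans ?_
  rw [Finset.sum_add_distrib, Finset.sum_add_distrib]
  have e1 : ∑ p ∈ m.primeFactors, Real.log x / x * ((p ^ m.factorization p : ℕ) : ℝ) = Real.log x / x * ppSum m := by
    rw [ppSum, Nat.cast_sum, Finset.mul_sum]
  have e2 : ∑ p ∈ m.primeFactors, (if p < x then Real.log p * (1 - p / x : ℝ) else 0)
      ≤ ∑ p ∈ (Finset.range x) with p.Prime, Real.log p * (1 - p / x) := by
    rw [← Finset.sum_filter]
    refine Finset.sum_le_sum_of_subset_of_nonneg ?_ ?_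
    · intro p hp
      simp only [Finset.mem_filter, Finset.mem_range] at hp ⊢
      exact ⟨hp.2, Nat.prime_of_mem_primeFactors hp.1⟩
    · intro p hp _
      simp only [Finset.mem_filter, Finset.mem_range] at hp
      have : (p:ℝ) / x ≤ 1 := by rw [div_le_one hx0]; exact_mod_cast hp.1.le
      exact mul_nonneg (Real.log_nonneg (by exact_mod_cast hp.2.one_lt.le)) (by linarith)
  have e3 : ∑ p ∈ m.primeFactors, (if p ≤ Nat.sqrt x then Real.log x else 0) ≤ (Nat.sqrt x + 1) * Real.log x := by
    rw [← Finset.sum_filter, Finset.sum_const, nsmul_eq_mul]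
    refine mul_le_mul_of_nonneg_right ?_ hlx.le
    have : (m.primeFactors.filter (fun p => p ≤ Nat.sqrt x)).card ≤ (Finset.range (Nat.sqrt x + 1)).card := by
      refine Finset.card_le_card fun p hp => ?_
      simp only [Finset.mem_filter, Finset.mem_range] at hp ⊢
      omega
    rw [Finset.card_range] at this
    exact_mod_cast this
  rw [e1]
  linarith

lemma weighted_sum_eq (x : ℕ) :
    ∑ p ∈ (Finset.range x) with p.Prime, Real.log p * ((x:ℝ) - p) = ∑ k ∈ Finset.range x, Chebyshev.theta k := by
  induction x with
  | zero => simp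
  | succ x ih =>
    rw [Finset.sum_range_succ, ← ih]
    have hth : Chebyshev.theta x = ∑ p ∈ (Finset.range (x+1)) with p.Prime, Real.log p := by
      rw [Chebyshev.theta_eq_sum_Icc, Nat.floor_natCast]
      congr 2
      ext y; simp
    have h2 : ∑ p ∈ (Finset.range x) with p.Prime, Real.log p * ((x:ℝ) - p) =
        ∑ p ∈ (Finset.range (x+1)) with p.Prime, Real.log p * ((x:ℝ) - p) := by
      rw [Finset.sum_filter, Finset.sum_filter, Finset.sum_range_succ]
      simp
    rw [h2, hth, ← Finset.sum_add_distrib]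
    refine Finset.sum_congr rfl fun p _ => ?_
    push_cast; ring

lemma weighted_sum_le (hpsi : ∀ ε : ℝ, 0 < ε → ∃ X0 : ℝ, ∀ x ≥ X0, Chebyshev.psi x ≤ (1 + ε) * x)
    (ε : ℝ) (hε : 0 < ε) : ∃ C : ℝ, ∀ x : ℕ, 0 < x →
      ∑ p ∈ (Finset.range x) with p.Prime, Real.log p * (1 - (p:ℝ) / x) ≤ (1 + ε) * x / 2 + C := by
  obtain ⟨X0, hX⟩ := hpsi ε hε
  refine ⟨Chebyshev.psi X0, fun x hx => ?_⟩
  have hx0 : (0:ℝ) < x := by exact_mod_cast hx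
  have hk : ∀ k ∈ Finset.range x, Chebyshev.theta k ≤ (1 + ε) * k + Chebyshev.psi X0 := by
    intro k _
    refine (Chebyshev.theta_le_psi _).trans ?_
    rcases le_total X0 k with h | h
    · linarith [hX k h, Chebyshev.psi_nonneg X0]
    · have := Chebyshev.psi_mono h
      have : 0 ≤ (1 + ε) * k := by positivity
      linarith
  have h1 : ∑ p ∈ (Finset.range x) with p.Prime, Real.log p * (1 - (p:ℝ) / x)
      = (∑ k ∈ Finset.range x, Chebyshev.theta k) / x := by
    rw [← weighted_sum_eq, Finset.sum_div]
    refine Finset.sum_congr rfl fun p _ => ?_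
    field_simp
  rw [h1, div_le_iff₀ hx0]
  refine (Finset.sum_le_sum hk).trans ?_
  rw [Finset.sum_add_distrib, ← Finset.mul_sum, Finset.sum_const, Finset.card_range, nsmul_eq_mul]
  have h2 : (∑ k ∈ Finset.range x, (k:ℝ)) ≤ x * x / 2 := by
    have : (∑ k ∈ Finset.range x, (k:ℝ)) * 2 = x * (x - 1) := by
      have := Finset.sum_range_id_mul_two x
      have h3 : ((∑ k ∈ Finset.range x, k : ℕ) : ℝ) * 2 = ((x * (x-1) : ℕ) : ℝ) := by exact_mod_cast this
      rw [Nat.cast_mul, Nat.cast_sub hx] at h3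
      simpa using h3
    nlinarith
  have h3 : (1 + ε) * (∑ k ∈ Finset.range x, (k:ℝ)) ≤ (1 + ε) * (x * x / 2) := by gcongr
  linarith

end LandauAux

namespace DFAaux
variable {σ Q : Type}

/-- there is a walk of length `k` from `p` to `q`. -/
def R (M : DFA σ Q) (k : ℕ) (p q : Q) : Prop := ∃ l : List σ, l.length = k ∧ M.evalFrom p l = q

lemma R_trans {M : DFA σ Q} {a b : ℕ} {p q r : Q} (h1 : R M a p q) (h2 : R M b q r) :
    R M (a + b) p r := by
  obtain ⟨l1, rfl, rfl⟩ := h1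
  obtain ⟨l2, rfl, rfl⟩ := h2
  exact ⟨l1 ++ l2, by simp, by rw [DFA.evalFrom_of_append]⟩

lemma R_mul {M : DFA σ Q} {a : ℕ} {p : Q} (h1 : R M a p p) (k : ℕ) : R M (a * k) p p := by
  induction k with
  | zero => exact ⟨[], by simp, by simp⟩
  | succ k ih => exact R_trans ih h1

/-- The vertex set of a cycle. -/
def IsCyc (M : DFA σ Q) (C : Finset Q) : Prop := C.Nonempty ∧ ∀ v ∈ C, R M C.card v v

lemma exists_cyc [Fintype Q] (M : DFA σ Q) (m : ℕ) (w : ℕ → Q)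
    (hw : ∀ i j, i ≤ j → j ≤ m → R M (j - i) (w i) (w j)) (hm : Fintype.card Q ≤ m) :
    ∃ C : Finset Q, IsCyc M C ∧ ∀ v ∈ C, ∃ i ≤ m, w i = v := by
  classical
  have hex : ∃ d, 0 < d ∧ ∃ i, i + d ≤ m ∧ w i = w (i + d) := by
    have : Fintype.card Q < Fintype.card (Fin (m+1)) := by simp; omega
    obtain ⟨x, y, hxy, h⟩ := Fintype.exists_ne_map_eq_of_card_lt (fun i : Fin (m+1) => w i) this
    rcases lt_or_gt_of_ne hxy with hlt | hlt
    · refine ⟨y - x, by have := Fin.lt_def.1 hlt; omega, x, ?_⟩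
      have := Fin.lt_def.1 hlt
      have hy := y.2
      rw [Nat.add_sub_cancel' this.le]
      exact ⟨by omega, h⟩
    · refine ⟨x - y, by have := Fin.lt_def.1 hlt; omega, y, ?_⟩
      have := Fin.lt_def.1 hlt
      have hy := x.2
      rw [Nat.add_sub_cancel' this.le]
      exact ⟨by omega, h.symm⟩
  obtain ⟨hd, i, him, hi⟩ := Nat.find_spec hex
  have hmin : ∀ d', d' < Nat.find hex → ¬ _ := fun d' h => Nat.find_min hex h
  set d := Nat.find hex with hdd
  have hinj : Set.InjOn (fun k => w (i + k)) (Finset.range d : Set ℕ) := by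
    have aux : ∀ a b, a < b → b < d → w (i + a) = w (i + b) → False := by
      intro a b hab hb h
      refine hmin (b - a) (by omega) ⟨by omega, i + a, by omega, ?_⟩
      rw [h]; congr 1; omega
    intro a ha b hb h
    simp only [Finset.coe_range, Set.mem_Iio] at ha hb
    rcases lt_trichotomy a b with h1 | h1 | h1
    · exact (aux a b h1 hb h).elim
    · exact h1
    · exact (aux b a h1 ha h.symm).elim
  refine ⟨(Finset.range d).image (fun k => w (i + k)), ⟨?_, ?_⟩, ?_⟩
  · exact (Finset.nonempty_range_iff.2 hd.ne').image _
  · rw [Finset.card_image_of_injOn hinj, Finset.card_range]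
    intro v hv
    obtain ⟨k, hk, rfl⟩ := Finset.mem_image.1 hv
    rw [Finset.mem_range] at hk
    have h1 := hw (i + k) (i + d) (by omega) him
    have h2 := hw i (i + k) (by omega) (by omega)
    rw [← hi] at h1
    have h3 := R_trans h1 h2
    convert h3 using 1
    omega
  · intro v hv
    obtain ⟨k, hk, rfl⟩ := Finset.mem_image.1 hv
    rw [Finset.mem_range] at hk
    exact ⟨i + k, by omega, rfl⟩

theorem min_univ_le [Fintype Q] (M : DFA σ Q) (h : ∃ ℓ : ℕ, IsUnivLength M.accepts ℓ) :
    ∃ s : Finset (Finset Q), (∀ C ∈ s, C.card ≠ 0) ∧ ∑ C ∈ s, C.card ≤ Fintype.card Q ∧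
      sInf {ℓ : ℕ | IsUnivLength M.accepts ℓ} ≤ Fintype.card Q + s.lcm Finset.card := by
  classical
  let good : Finset (Finset Q) → Prop := fun s =>
    (∀ C ∈ s, IsCyc M C) ∧ (s : Set (Finset Q)).PairwiseDisjoint id
  have hne : (Finset.univ.filter good).Nonempty := ⟨∅, by simp [good]⟩
  obtain ⟨s, hs, hmax⟩ := Finset.exists_max_image (Finset.univ.filter good) Finset.card hne
  simp only [Finset.mem_filter, Finset.mem_univ, true_and] at hs hmax
  obtain ⟨hcyc, hdisj⟩ := hs
  refine ⟨s, fun C hC => (Finset.card_pos.2 (hcyc C hC).1).ne', ?_, ?_⟩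
  · rw [← Finset.card_univ]
    have := Finset.card_biUnion (s := s) (t := id) (fun a ha b hb hab => hdisj ha hb hab)
    simp only [id] at this
    rw [← this]
    exact Finset.card_le_card (Finset.subset_univ _)
  · by_contra! hlt
    set ℓ := sInf {ℓ : ℕ | IsUnivLength M.accepts ℓ} with hℓ
    set P := s.lcm Finset.card with hP
    have hmem : IsUnivLength M.accepts ℓ := Nat.sInf_mem h
    have hP0 : P ≠ 0 := by
      rw [hP, Ne, Finset.lcm_eq_zero_iff]
      rintro ⟨C, hC, h0⟩
      exact (Finset.card_pos.2 (hcyc C hC).1).ne' h0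
    have hnot : ¬ IsUnivLength M.accepts (ℓ - P) := by
      intro hu
      have := Nat.sInf_le (s := {ℓ : ℕ | IsUnivLength M.accepts ℓ}) hu
      rw [← hℓ] at this
      omega
    unfold IsUnivLength at hnot
    push Not at hnot
    obtain ⟨l, hl, hacc⟩ := hnot
    let w : ℕ → Q := fun i => M.evalFrom M.start (l.take i)
    have hw : ∀ i j, i ≤ j → j ≤ l.length → R M (j - i) (w i) (w j) := by
      intro i j hij hj
      refine ⟨(l.drop i).take (j - i), by simp; omega, ?_⟩
      simp only [w]
      rw [← DFA.evalFrom_of_append, ← List.take_add, Nat.add_sub_cancel' hij]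
    obtain ⟨C, hC, hCw⟩ := exists_cyc M l.length w hw (by omega)
    -- C meets some chosen cycle
    have hmeet : ∃ D ∈ s, ¬ Disjoint C D := by
      by_contra! hno
      have hCs : C ∉ s := by
        intro hCs
        have := hno C hCs
        rw [disjoint_self] at this
        exact hC.1.ne_empty this
      have : good (insert C s) := by
        refine ⟨?_, ?_⟩
        · intro D hD
          rcases Finset.mem_insert.1 hD with rfl | hD
          · exact hC
          · exact hcyc D hD
        · rw [Finset.coe_insert]
          refine hdisj.insert fun D hD _ => hno D hD
      have := hmax _ this
      rw [Finset.card_insert_of_notMem hCs] at this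
      omega
    obtain ⟨D, hD, hCD⟩ := hmeet
    obtain ⟨v, hvC, hvD⟩ := Finset.not_disjoint_iff.1 hCD
    obtain ⟨i, him, hi⟩ := hCw v hvC
    obtain ⟨k, hk⟩ : D.card ∣ P := Finset.dvd_lcm hD
    have h1 := hw 0 i (by omega) him
    have h2 := hw i l.length him le_rfl
    have h3 := R_mul ((hcyc D hD).2 v hvD) k
    rw [← hk, ← hi] at h3
    obtain ⟨l', hl', he⟩ := R_trans (R_trans h1 h3) h2
    have h4 := hmem l' (by omega)
    apply hacc
    simp only [w, List.take_zero, List.take_length, DFA.evalFrom_nil] at he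
    rw [DFA.mem_accepts, DFA.eval] at h4 ⊢
    rwa [he] at h4

end DFAaux

namespace FinalAux
open Filter Topology Asymptotics

lemma ev_small (C δ : ℝ) (hδ : 0 < δ) :
    ∀ᶠ z : ℝ in atTop, (Real.sqrt z + 1) * Real.log z + C ≤ δ * z := by
  have h1 : (fun z : ℝ => Real.sqrt z + 1) =O[atTop] fun z : ℝ => Real.sqrt z := by
    refine IsBigO.of_bound 2 ?_
    filter_upwards [eventually_ge_atTop 1] with z hz
    have : 1 ≤ Real.sqrt z := Real.one_le_sqrt.2 hz
    rw [Real.norm_of_nonneg (by linarith), Real.norm_of_nonneg (by linarith)]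
    linarith
  have h2 : Real.log =o[atTop] fun z : ℝ => Real.sqrt z := by
    have := isLittleO_log_rpow_atTop (r := 1/2) (by norm_num)
    simpa [Real.sqrt_eq_rpow] using this
  have h3 := (h1.mul_isLittleO h2).def (half_pos hδ)
  have h4 := eventually_ge_atTop (2 * C / δ)
  filter_upwards [h3, h4, eventually_ge_atTop 0] with z a b c
  rw [← Real.sqrt_mul_self c] at b
  have e : ‖Real.sqrt z * Real.sqrt z‖ = z := by
    rw [Real.mul_self_sqrt c, Real.norm_of_nonneg c]
  rw [e] at a
  rw [Real.sqrt_mul_self c, div_le_iff₀ hδ] at b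
  have := (le_abs_self _).trans a
  linarith

lemma final_bound (hpsi : ∀ ε : ℝ, 0 < ε → ∃ X0 : ℝ, ∀ x ≥ X0, Chebyshev.psi x ≤ (1 + ε) * x)
    (ε : ℝ) (hε : 0 < ε) : ∃ N : ℕ, ∀ n : ℕ, N ≤ n → ∀ P : ℕ, P ≠ 0 → LandauAux.ppSum P ≤ n →
      ((n + P : ℕ) : ℝ) ≤ Real.exp ((1 + ε) * Real.sqrt ((n : ℝ) * Real.log (n : ℝ))) := by
  obtain ⟨δ, hδ0, hδ1, hδε⟩ : ∃ δ : ℝ, 0 < δ ∧ δ ≤ 1 ∧ 5 * δ ≤ ε :=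
    ⟨min 1 (ε / 5), by positivity, min_le_left _ _, by linarith [min_le_right 1 (ε/5)]⟩
  obtain ⟨C, hC⟩ := LandauAux.weighted_sum_le hpsi δ hδ0
  have hcast := tendsto_natCast_atTop_atTop (R := ℝ)
  have hlog : Tendsto (fun n : ℕ => Real.log n) atTop atTop := Real.tendsto_log_atTop.comp hcast
  have hn1 : Tendsto (fun n : ℕ => (n:ℝ) + 1) atTop atTop := tendsto_atTop_add_const_right _ _ hcast
  have hXt : Tendsto (fun n : ℕ => Real.sqrt (n * Real.log n)) atTop atTop :=
    Real.tendsto_sqrt_atTop.comp (hcast.atTop_mul_atTop₀ hlog)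
  have hz : Tendsto (fun n : ℕ => Real.sqrt (n * Real.log n) + 1) atTop atTop :=
    tendsto_atTop_add_const_right _ _ hXt
  have ev1 := hz.eventually (ev_small (C + 1) δ hδ0)
  have ev2 : ∀ᶠ n : ℕ in atTop, Real.log ((n:ℝ) + 1) ≤ δ * Real.sqrt ((n:ℝ) + 1) := by
    have h2 : Real.log =o[atTop] fun z : ℝ => Real.sqrt z := by
      have := isLittleO_log_rpow_atTop (r := 1/2) (by norm_num)
      simpa [Real.sqrt_eq_rpow] using this
    filter_upwards [hn1.eventually (h2.def hδ0)] with n hn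
    rw [Real.norm_of_nonneg (Real.sqrt_nonneg _)] at hn
    exact (le_abs_self _).trans hn
  have ev3 : ∀ᶠ n : ℕ in atTop, Real.log 2 + Real.log (Real.log n) / 2 ≤ δ * Real.log n := by
    have h2 := hlog.eventually ((Real.isLittleO_log_id_atTop).def hδ0)
    filter_upwards [h2, hlog.eventually (eventually_ge_atTop (2 * Real.log 2 / δ)),
      hlog.eventually (eventually_ge_atTop 0)] with n a b c
    have h3 := (le_abs_self _).trans a
    simp only [id, Real.norm_of_nonneg c] at h3
    rw [div_le_iff₀ hδ0] at b
    linarith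
  obtain ⟨N, hN⟩ := (ev1.and (ev2.and (ev3.and ((hXt.eventually (eventually_ge_atTop 3)).and
    ((hlog.eventually (eventually_ge_atTop 2)).and (eventually_ge_atTop 1)))))).exists_forall_of_atTop
  refine ⟨N, fun n hn P hP hsum => ?_⟩
  obtain ⟨e1, e2, e3, hX3, hL2, hn1⟩ := hN n hn
  set L := Real.log n with hL
  set X := Real.sqrt (n * L) with hX
  have hn0 : (1:ℝ) ≤ n := by exact_mod_cast hn1
  have hXsq : X * X = n * L := Real.mul_self_sqrt (by nlinarith)
  set x := ⌈X⌉₊ with hx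
  have hxX : X ≤ x := Nat.le_ceil X
  have hxX1 : (x:ℝ) ≤ X + 1 := (Nat.ceil_lt_add_one (by linarith)).le
  have hx3 : 3 ≤ x := by
    have : (3:ℝ) ≤ x := hX3.trans hxX
    exact_mod_cast this
  have hx0 : (0:ℝ) < x := by linarith
  have hlogP := LandauAux.log_le_main hP hx3
  have hCx := hC x (by omega)
  have hlx0 : 0 ≤ Real.log x := Real.log_nonneg (by linarith)
  -- bound of log x
  have hlx : Real.log x ≤ (1/2 + δ) * L := by
    have h1 : Real.log x ≤ Real.log (2 * X) := Real.log_le_log hx0 (by linarith)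
    have h2 : Real.log (2 * X) = Real.log 2 + (L + Real.log L) / 2 := by
      rw [Real.log_mul (by norm_num) (by linarith), hX, Real.log_sqrt (by nlinarith),
        Real.log_mul (by linarith) (by linarith)]
    linarith
  have t1 : Real.log x / x * LandauAux.ppSum P ≤ (1/2 + δ) * X := by
    have hs : (LandauAux.ppSum P : ℝ) ≤ n := by exact_mod_cast hsum
    calc Real.log x / x * LandauAux.ppSum P ≤ ((1/2 + δ) * L) / X * n := by gcongr
      _ = (1/2 + δ) * (n * L) / X := by ring
      _ = (1/2 + δ) * X := by rw [← hXsq]; field_simp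
  have t2 : ((Nat.sqrt x : ℝ) + 1) * Real.log x ≤ (Real.sqrt (X + 1) + 1) * Real.log (X + 1) := by
    have h1 : (Nat.sqrt x : ℝ) ≤ Real.sqrt (X+1) :=
      (Real.nat_sqrt_le_real_sqrt).trans (Real.sqrt_le_sqrt hxX1)
    have h2 : Real.log x ≤ Real.log (X+1) := Real.log_le_log hx0 hxX1
    gcongr
  have t3 : Real.log ((n:ℝ)+1) ≤ δ * X := by
    refine e2.trans ?_
    have : Real.sqrt ((n:ℝ)+1) ≤ X := Real.sqrt_le_sqrt (by nlinarith)
    gcongr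
  have t4 : (1 + δ) * x / 2 ≤ (1 + δ) * (X + 1) / 2 := by gcongr
  have hP1 : (1:ℝ) ≤ P := by exact_mod_cast Nat.one_le_iff_ne_zero.2 hP
  have h5 : ((n + P : ℕ) : ℝ) ≤ ((n:ℝ)+1) * P := by push_cast; nlinarith
  have h6 : Real.log (((n:ℝ)+1) * P) ≤ (1 + ε) * X := by
    rw [Real.log_mul (by linarith) (by linarith)]
    have : 5 * δ * X ≤ ε * X := by gcongr
    nlinarith
  calc ((n + P : ℕ) : ℝ) ≤ ((n:ℝ)+1) * P := h5
    _ = Real.exp (Real.log (((n:ℝ)+1) * P)) := (Real.exp_log (by positivity)).symm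
    _ ≤ _ := Real.exp_le_exp.2 h6

end FinalAux

/-- Asymptotic upper bound on the minimal universality length of an `n`-state DFA:
for every `ε > 0`, for all sufficiently large `n`, every `n`-state DFA with a universal
length has minimal universality length at most `exp ((1 + ε) * √(n * log n))`. -/
theorem dfa_min_univ_length_upper_bound :
    ∀ ε : ℝ, 0 < ε → ∃ N : ℕ, ∀ n : ℕ, N ≤ n →
      ∀ (σ Q : Type) [Fintype σ] [Nonempty σ] [Fintype Q],
        Fintype.card Q = n →
        ∀ M : DFA σ Q, (∃ ℓ : ℕ, IsUnivLength M.accepts ℓ) →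
          ((sInf {ℓ : ℕ | IsUnivLength M.accepts ℓ} : ℕ) : ℝ) ≤
            Real.exp ((1 + ε) * Real.sqrt ((n : ℝ) * Real.log (n : ℝ))) := by
  intro ε hε
  obtain ⟨N, hN⟩ := FinalAux.final_bound PNTaux.psi_upper ε hε
  refine ⟨N, fun n hn σ Q _ _ _ hcard M hM => ?_⟩
  obtain ⟨s, hs0, hsum, hle⟩ := DFAaux.min_univ_le M hM
  obtain ⟨hP0, hpp⟩ := LandauAux.ppSum_finset_lcm s Finset.card hs0
  rw [hcard] at hsum hle
  exact le_trans (by exact_mod_cast hle) (hN n hn _ hP0 (hpp.trans hsum))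
end

section
/- For every ε > 0 there exists N such that for all n ≥ N there exists a DFA M with exactly n states over a two-letter alphabet such that M has a universal length and its minimal universality length is at least exp((1 − ε)·√(n·log n)). -/
section PartA


section DFApart

/-- The state set: a chain of `k` states, one cycle for each `p i`, and padding. -/
abbrev UState (k : ℕ) (p : Fin k → ℕ) (d : ℕ) : Type :=
  Fin k ⊕ ((Σ i : Fin k, Fin (p i)) ⊕ Fin d)

/-- Position of the time `t` on the cycle `i`. -/
def cyc {k : ℕ} (p : Fin k → ℕ) (d : ℕ) (hp : ∀ i, 0 < p i) (i : Fin k) (t : ℕ) :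
    UState k p d := Sum.inr (Sum.inl ⟨i, ⟨t % p i, Nat.mod_lt _ (hp i)⟩⟩)

/-- Transition function. -/
def ustep {k : ℕ} (p : Fin k → ℕ) (d : ℕ) (hp : ∀ i, 0 < p i) :
    UState k p d → Bool → UState k p d
  | Sum.inl j, b => if h : b = true ∧ j.1 + 1 < k then Sum.inl ⟨j.1 + 1, h.2⟩
      else cyc p d hp j (j.1 + 1)
  | Sum.inr (Sum.inl ⟨i, c⟩), _ => cyc p d hp i (c.1 + 1)
  | Sum.inr (Sum.inr x), _ => Sum.inr (Sum.inr x)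

/-- The automaton. -/
def uDFA {k : ℕ} (p : Fin k → ℕ) (d : ℕ) (hp : ∀ i, 0 < p i) (hk : 0 < k) :
    DFA Bool (UState k p d) where
  step := ustep p d hp
  start := Sum.inl ⟨0, hk⟩
  accept := {q | ∃ i, q = cyc p d hp i 0}

variable {k : ℕ} (p : Fin k → ℕ) (d : ℕ) (hp : ∀ i, 0 < p i) (hk : 0 < k)

theorem ustep_cyc (i : Fin k) (t : ℕ) (b : Bool) :
    ustep p d hp (cyc p d hp i t) b = cyc p d hp i (t + 1) := by
  simp [cyc, ustep]

theorem uDFA_inv (w : List Bool) :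
    (∃ h : w.length < k, (uDFA p d hp hk).eval w = Sum.inl ⟨w.length, h⟩) ∨
    (∃ i, (uDFA p d hp hk).eval w = cyc p d hp i w.length) := by
  induction w using List.reverseRecOn with
  | nil => left; exact ⟨hk, rfl⟩
  | append_singleton w b ih =>
    rw [DFA.eval_append_singleton]
    rcases ih with ⟨h, e⟩ | ⟨i, e⟩
    · rw [e]
      by_cases hb : b = true ∧ w.length + 1 < k
      · left
        refine ⟨by simpa using hb.2, ?_⟩
        simp [uDFA, ustep, hb]
      · right
        refine ⟨⟨w.length, h⟩, ?_⟩
        simp only [uDFA, ustep, dif_neg hb]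
        simp
    · right
      refine ⟨i, ?_⟩
      rw [e]
      simp only [uDFA, ustep_cyc]
      simp

theorem uDFA_true (j : ℕ) (hj : j < k) :
    (uDFA p d hp hk).eval (List.replicate j true) = Sum.inl ⟨j, hj⟩ := by
  induction j with
  | zero => rfl
  | succ j ih =>
    rw [List.replicate_succ', DFA.eval_append_singleton, ih (by omega)]
    simp [uDFA, ustep, hj]

theorem uDFA_word (i : Fin k) (m : ℕ) :
    (uDFA p d hp hk).eval (List.replicate i.1 true ++ List.replicate (m + 1) false) =
      cyc p d hp i (i.1 + m + 1) := by
  induction m with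
  | zero =>
    rw [List.replicate_one, DFA.eval_append_singleton, uDFA_true p d hp hk _ i.2]
    simp [uDFA, ustep]
  | succ m ih =>
    rw [List.replicate_succ', ← List.append_assoc, DFA.eval_append_singleton, ih]
    simp only [uDFA, ustep_cyc]
    rfl

theorem cyc_accept (i : Fin k) (t : ℕ) :
    cyc p d hp i t ∈ (uDFA p d hp hk).accept ↔ p i ∣ t := by
  constructor
  · rintro ⟨j, hj⟩
    simp only [cyc, Sum.inr.injEq, Sum.inl.injEq] at hj
    obtain ⟨rfl, h⟩ := Sigma.mk.inj_iff.1 hj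
    have := eq_of_heq h
    simp at this
    exact Nat.dvd_of_mod_eq_zero this
  · intro h
    refine ⟨i, ?_⟩
    simp [cyc, Nat.mod_eq_zero_of_dvd h]

theorem uDFA_univ : IsUnivLength (uDFA p d hp hk).accepts (k * ∏ i, p i) := by
  intro w hw
  rw [DFA.mem_accepts]
  rcases uDFA_inv p d hp hk w with ⟨h, _⟩ | ⟨i, e⟩
  · have : 0 < ∏ i, p i := Finset.prod_pos fun i _ => hp i
    nlinarith
  · rw [e, cyc_accept, hw]
    exact (Finset.dvd_prod_of_mem p (Finset.mem_univ i)).mul_left k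

theorem uDFA_lower (hc : Pairwise fun i j => Nat.Coprime (p i) (p j)) (l : ℕ)
    (hl : IsUnivLength (uDFA p d hp hk).accepts l) : ∏ i, p i ≤ l := by
  have key : ∀ j : ℕ, ∀ h : j < k,
      (Sum.inl ⟨j, h⟩ : UState k p d) ∉ (uDFA p d hp hk).accept := by
    rintro j h ⟨i, hi⟩
    simp [cyc] at hi
  have hlk : k ≤ l := by
    by_contra! h
    have := hl (List.replicate l true) (by simp)
    rw [DFA.mem_accepts, uDFA_true p d hp hk l h] at this
    exact key _ _ this
  refine Nat.le_of_dvd (by omega) ?_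
  refine Fintype.prod_dvd_of_isRelPrime (fun i j hij => ?_) fun i => ?_
  · exact Nat.coprime_iff_isRelPrime.1 (hc hij)
  · have hi := i.2
    have := hl (List.replicate i.1 true ++ List.replicate ((l - i.1 - 1) + 1) false)
      (by simp; omega)
    rw [DFA.mem_accepts, uDFA_word, cyc_accept] at this
    have e : l = i.1 + (l - i.1 - 1) + 1 := by omega
    rwa [← e] at this

end DFApart

theorem dfa_of_primes (P : Finset ℕ) (hP : ∀ p ∈ P, p.Prime) (hne : P.Nonempty) (n : ℕ)
    (hn : ∑ p ∈ P, p + P.card ≤ n) :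
    ∃ (Q : Type) (inst : Fintype Q), @Fintype.card Q inst = n ∧
        ∃ M : DFA Bool Q,
          (∃ ℓ : ℕ, IsUnivLength M.accepts ℓ) ∧
          ∏ p ∈ P, p ≤ sInf {ℓ : ℕ | IsUnivLength M.accepts ℓ} := by
  have e := P.equivFin.symm
  have hk : 0 < P.card := hne.card_pos
  let p : Fin P.card → ℕ := fun i => (e i).1
  have hp : ∀ i, (p i).Prime := fun i => hP _ (e i).2
  have hp0 : ∀ i, 0 < p i := fun i => (hp i).pos
  have hsum : ∑ i, p i = ∑ q ∈ P, q := by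
    rw [← Finset.sum_coe_sort P]; exact e.sum_comp (fun q : P => q.1)
  have hprod : ∏ i, p i = ∏ q ∈ P, q := by
    rw [← Finset.prod_coe_sort P]; exact e.prod_comp (fun q : P => q.1)
  have hc : Pairwise fun i j => Nat.Coprime (p i) (p j) := by
    intro i j hij
    refine (Nat.coprime_primes (hp i) (hp j)).2 fun h => hij ?_
    exact e.injective (Subtype.ext h)
  let d := n - (∑ q ∈ P, q + P.card)
  refine ⟨UState P.card p d, inferInstance, ?_, uDFA p d hp0 hk, ⟨_, uDFA_univ p d hp0 hk⟩, ?_⟩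
  · simp only [Fintype.card_sum, Fintype.card_fin, Fintype.card_sigma, hsum, d]
    omega
  · rw [← hprod]
    exact uDFA_lower p d hp0 hk hc _ (Nat.sInf_mem (s := {ℓ : ℕ | IsUnivLength
      (uDFA p d hp0 hk).accepts ℓ}) ⟨_, uDFA_univ p d hp0 hk⟩)

end PartA

section PartB
open Complex MeasureTheory Set Filter Topology intervalIntegral

noncomputable section
/-- The Fejér kernel -/
def fejK (x : ℝ) : ℝ := if x = 0 then 1 else 2 * (1 - Real.cos x) / x ^ 2

theorem fejK_eq (x : ℝ) :
    ∫ t in (-1 : ℝ)..1, ((1 - |t| : ℝ) : ℂ) * cexp (t * x * I) = (fejK x : ℂ) := by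
  have hcont : Continuous fun t : ℝ => ((1 - |t| : ℝ) : ℂ) * cexp (t * x * I) := by fun_prop
  rw [← integral_add_adjacent_intervals (b := 0) (hcont.intervalIntegrable _ _)
    (hcont.intervalIntegrable _ _)]
  have e1 : ∫ t in (-1 : ℝ)..0, ((1 - |t| : ℝ) : ℂ) * cexp (t * x * I) =
      ∫ t in (-1 : ℝ)..0, (1 + (t : ℂ)) * cexp (t * x * I) := by
    refine integral_congr fun t ht => ?_
    rw [uIcc_of_le (by norm_num)] at ht
    simp only [abs_of_nonpos ht.2]
    push_cast; ring
  have e2 : ∫ t in (0 : ℝ)..1, ((1 - |t| : ℝ) : ℂ) * cexp (t * x * I) =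
      ∫ t in (0 : ℝ)..1, (1 - (t : ℂ)) * cexp (t * x * I) := by
    refine integral_congr fun t ht => ?_
    rw [uIcc_of_le (by norm_num)] at ht
    simp only [abs_of_nonneg ht.1]
    push_cast; ring
  rw [e1, e2]
  by_cases hx : x = 0
  · subst hx
    have d1 : ∀ t : ℝ, HasDerivAt (fun t : ℝ => (t : ℂ) + (t : ℂ) ^ 2 / 2) (1 + (t : ℂ)) t := by
      intro t
      have h := (hasDerivAt_id t).ofReal_comp
      refine (h.add ((h.pow 2).div_const 2)).congr_deriv ?_
      simp
    have d2 : ∀ t : ℝ, HasDerivAt (fun t : ℝ => (t : ℂ) - (t : ℂ) ^ 2 / 2) (1 - (t : ℂ)) t := by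
      intro t
      have h := (hasDerivAt_id t).ofReal_comp
      refine (h.sub ((h.pow 2).div_const 2)).congr_deriv ?_
      simp
    simp only [ofReal_zero, mul_zero, zero_mul, Complex.exp_zero, mul_one]
    rw [integral_eq_sub_of_hasDerivAt (fun t _ => d1 t)
        ((by fun_prop : Continuous _).intervalIntegrable _ _),
      integral_eq_sub_of_hasDerivAt (fun t _ => d2 t)
        ((by fun_prop : Continuous _).intervalIntegrable _ _)]
    simp [fejK]
    norm_num
  · have hx' : (x : ℂ) ≠ 0 := by exact_mod_cast hx
    have hE : ∀ t : ℝ, HasDerivAt (fun t : ℝ => cexp (t * x * I)) (cexp (t * x * I) * (x * I)) t := by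
      intro t
      have h := (((hasDerivAt_id t).ofReal_comp.mul_const (x : ℂ)).mul_const I).cexp
      simpa using h
    have d1 : ∀ t : ℝ, HasDerivAt (fun t : ℝ => (1 + (t : ℂ)) * (cexp (t * x * I) / (x * I)) -
        cexp (t * x * I) / (x * I) ^ 2) ((1 + (t : ℂ)) * cexp (t * x * I)) t := by
      intro t
      have h := (hasDerivAt_id t).ofReal_comp
      refine (((h.const_add 1).mul ((hE t).div_const (x * I))).sub ((hE t).div_const ((x * I) ^ 2))).congr_deriv ?_
      simp
      field_simp
      ring
    have d2 : ∀ t : ℝ, HasDerivAt (fun t : ℝ => (1 - (t : ℂ)) * (cexp (t * x * I) / (x * I)) +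
        cexp (t * x * I) / (x * I) ^ 2) ((1 - (t : ℂ)) * cexp (t * x * I)) t := by
      intro t
      have h := (hasDerivAt_id t).ofReal_comp
      refine (((h.const_sub 1).mul ((hE t).div_const (x * I))).add ((hE t).div_const ((x * I) ^ 2))).congr_deriv ?_
      simp
      field_simp
      ring
    rw [integral_eq_sub_of_hasDerivAt (fun t _ => d1 t)
        ((by fun_prop : Continuous _).intervalIntegrable _ _),
      integral_eq_sub_of_hasDerivAt (fun t _ => d2 t)
        ((by fun_prop : Continuous _).intervalIntegrable _ _)]
    simp only [fejK, if_neg hx]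
    push_cast
    rw [Complex.cos]
    simp only [zero_mul, Complex.exp_zero, one_mul, neg_mul, mul_pow, I_sq]
    field_simp
    ring

theorem fejK_nonneg (x : ℝ) : 0 ≤ fejK x := by
  unfold fejK
  split_ifs
  · norm_num
  · have := Real.cos_le_one x
    have : 0 ≤ 1 - Real.cos x := by linarith
    positivity

theorem fejK_meas : Measurable fejK := by
  unfold fejK
  refine Measurable.ite (measurableSet_singleton 0) measurable_const ?_
  fun_prop

theorem fejK_le (x : ℝ) : fejK x ≤ 8 * (1 + x ^ 2)⁻¹ := by
  rw [← div_eq_mul_inv, le_div_iff₀ (by positivity)]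
  unfold fejK
  split_ifs with h
  · subst h; norm_num
  · have hx2 : 0 < x ^ 2 := by positivity
    rw [div_mul_eq_mul_div, div_le_iff₀ hx2]
    have h1 := Real.one_sub_sq_div_two_le_cos (x := x)
    have h2 := Real.neg_one_le_cos x
    by_cases hx1 : x ^ 2 ≤ 1 <;> nlinarith

theorem fejK_integrable : Integrable fejK := by
  refine (integrable_inv_one_add_sq.const_mul 8).mono' fejK_meas.aestronglyMeasurable ?_
  refine Eventually.of_forall fun x => ?_
  rw [Real.norm_of_nonneg (fejK_nonneg x)]
  exact fejK_le x

theorem fejK_integral_pos : 0 < ∫ x, fejK x := by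
  rw [integral_pos_iff_support_of_nonneg fejK_nonneg fejK_integrable]
  refine lt_of_lt_of_le ?_ (measure_mono (s := Ioo 0 1) ?_)
  · simp
  · intro x hx
    have hx0 : x ≠ 0 := hx.1.ne'
    have : Real.cos x < 1 := by
      rw [← Real.cos_zero]
      exact Real.cos_lt_cos_of_nonneg_of_le_pi le_rfl (by linarith [Real.pi_gt_three, hx.2]) hx.1
    have h2 : 0 < 1 - Real.cos x := by linarith
    simp only [Function.mem_support, fejK, if_neg hx0]
    positivity
end

end PartB

section PartC
open Complex MeasureTheory Set Filter Topology intervalIntegral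

theorem WI_fubini (b : ℝ → ℝ) (hb : Measurable b) (C : ℝ) (hC : ∀ u, |b u| ≤ C) (G : ℂ → ℂ)
    (hL : ∀ z : ℂ, 0 < z.re → ∫ u in Ioi (0 : ℝ), (b u : ℂ) * cexp (-z * u) = G z)
    (l y s : ℝ) (hs : 0 < s) :
    ∫ u in Ioi (0 : ℝ), ((b u * Real.exp (-s * u) * fejK (l * (y - u)) : ℝ) : ℂ) =
      ∫ t in (-1 : ℝ)..1, ((1 - |t| : ℝ) : ℂ) * cexp (t * (l * y : ℝ) * I) * G (s + l * t * I) := by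
  have hbi : IntegrableOn (fun u => (b u * Real.exp (-s * u) : ℝ)) (Ioi 0) := by
    refine Integrable.bdd_mul (c := C) (exp_neg_integrableOn_Ioi 0 hs) hb.aestronglyMeasurable ?_
    exact Eventually.of_forall hC
  have hIntg : Integrable (Function.uncurry fun (u t : ℝ) =>
      ((b u * Real.exp (-s * u) : ℝ) : ℂ) * (((1 - |t| : ℝ) : ℂ) * cexp (t * (l * (y - u) : ℝ) * I)))
      ((volume.restrict (Ioi (0 : ℝ))).prod (volume.restrict (Ioc (-1 : ℝ) 1))) := by
    have hi2 : Integrable (fun t : ℝ => ((1 - |t| : ℝ) : ℂ)) (volume.restrict (Ioc (-1 : ℝ) 1)) := by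
      have : Continuous (fun t : ℝ => ((1 - |t| : ℝ) : ℂ)) := by fun_prop
      exact this.integrableOn_Ioc
    have h3 := (hbi.ofReal (𝕜 := ℂ)).mul_prod hi2
    have h4 := Integrable.bdd_mul (c := 1)
      (f := fun z : ℝ × ℝ => cexp (z.2 * (l * (y - z.1) : ℝ) * I)) h3
      (by fun_prop) (Eventually.of_forall fun z => by
        rw [← ofReal_mul, Complex.norm_exp_ofReal_mul_I])
    refine h4.congr (Eventually.of_forall fun z => ?_)
    simp only [Function.uncurry]
    simp only [coe_algebraMap]
    ring
  have key := integral_integral_swap hIntg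
  have hle : (-1 : ℝ) ≤ 1 := by norm_num
  calc _ = ∫ u in Ioi (0 : ℝ), ∫ t in Ioc (-1 : ℝ) 1, ((b u * Real.exp (-s * u) : ℝ) : ℂ) *
            (((1 - |t| : ℝ) : ℂ) * cexp (t * (l * (y - u) : ℝ) * I)) := by
        refine integral_congr_ae (Eventually.of_forall fun u => ?_)
        simp only
        rw [MeasureTheory.integral_const_mul, ← integral_of_le hle, fejK_eq, ← ofReal_mul]
    _ = _ := by
        rw [key, integral_of_le hle]
        refine integral_congr_ae (Eventually.of_forall fun t => ?_)
        simp only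
        rw [← hL _ (by simp [hs]), ← MeasureTheory.integral_const_mul]
        refine integral_congr_ae (Eventually.of_forall fun u => ?_)
        simp only
        push_cast
        rw [show (t : ℂ) * (l * (y - u)) * I = t * (l * y) * I + -(l * t * I) * u by ring,
          Complex.exp_add, show -((s : ℂ) + l * t * I) * u = -s * u + -(l * t * I) * u by ring,
          Complex.exp_add]
        ring

theorem fejK_comp_integrable (l y : ℝ) (hl : 0 < l) : Integrable fun u => fejK (l * (y - u)) := by
  have h1 : Integrable fun u => fejK (l * u) := fejK_integrable.comp_mul_left' hl.ne'
  exact h1.comp_sub_left y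

theorem WI_limit (b : ℝ → ℝ) (hb : Measurable b) (C : ℝ) (hC : ∀ u, |b u| ≤ C) (G : ℂ → ℂ)
    (hG : ContinuousOn G {z | 0 ≤ z.re})
    (hL : ∀ z : ℂ, 0 < z.re → ∫ u in Ioi (0 : ℝ), (b u : ℂ) * cexp (-z * u) = G z)
    (l y : ℝ) (hl : 0 < l) :
    ∫ u in Ioi (0 : ℝ), ((b u * fejK (l * (y - u)) : ℝ) : ℂ) =
      ∫ t in (-1 : ℝ)..1, ((1 - |t| : ℝ) : ℂ) * cexp (t * (l * y : ℝ) * I) * G (l * t * I) := by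
  have hC0 : 0 ≤ C := (abs_nonneg _).trans (hC 0)
  have T1 : Tendsto (fun s : ℝ => ∫ u in Ioi (0 : ℝ),
      ((b u * Real.exp (-s * u) * fejK (l * (y - u)) : ℝ) : ℂ)) (𝓝[>] 0)
      (𝓝 (∫ u in Ioi (0 : ℝ), ((b u * fejK (l * (y - u)) : ℝ) : ℂ))) := by
    refine tendsto_integral_filter_of_dominated_convergence
      (fun u => C * fejK (l * (y - u))) ?_ ?_ ?_ ?_
    · refine Eventually.of_forall fun s => Measurable.aestronglyMeasurable ?_
      have := fejK_meas
      fun_prop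
    · filter_upwards [self_mem_nhdsWithin] with s hs
      filter_upwards [ae_restrict_mem measurableSet_Ioi] with u hu
      rw [Complex.norm_real, norm_mul, norm_mul, Real.norm_of_nonneg (fejK_nonneg _)]
      refine mul_le_mul_of_nonneg_right ?_ (fejK_nonneg _)
      have h1 : ‖Real.exp (-s * u)‖ ≤ 1 := by
        rw [Real.norm_of_nonneg (Real.exp_pos _).le]
        refine Real.exp_le_one_iff.2 ?_
        have : 0 < s * u := mul_pos hs hu
        linarith
      calc ‖b u‖ * ‖Real.exp (-s * u)‖ ≤ C * 1 := by
            gcongr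
            exact hC u
        _ = C := mul_one C
    · exact ((fejK_comp_integrable l y hl).const_mul C).integrableOn
    · refine Eventually.of_forall fun u => ?_
      have : Continuous fun s : ℝ => ((b u * Real.exp (-s * u) * fejK (l * (y - u)) : ℝ) : ℂ) := by
        fun_prop
      have h := this.tendsto 0
      simp only [neg_zero, zero_mul, Real.exp_zero, mul_one] at h
      exact h.mono_left nhdsWithin_le_nhds
  have hGc : ∀ t : ℝ, ContinuousWithinAt (fun s : ℝ => G (s + l * t * I)) (Ici 0) 0 := by
    intro t
    refine ContinuousWithinAt.comp (t := {z : ℂ | 0 ≤ z.re}) ?_ ?_ ?_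
    · exact hG _ (by simp)
    · fun_prop
    · intro s hs; simpa using hs
  have hGcont : ContinuousOn (fun z : ℝ × ℝ => G (z.1 + l * z.2 * I)) (Icc 0 1 ×ˢ Icc (-1) 1) := by
    refine hG.comp (by fun_prop) ?_
    rintro ⟨s, t⟩ ⟨h1, h2⟩
    simpa using h1.1
  obtain ⟨B, hB⟩ := (isCompact_Icc.prod isCompact_Icc).exists_bound_of_continuousOn hGcont
  have T2 : Tendsto (fun s : ℝ => ∫ t in (-1 : ℝ)..1, ((1 - |t| : ℝ) : ℂ) *
      cexp (t * (l * y : ℝ) * I) * G (s + l * t * I)) (𝓝[>] 0)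
      (𝓝 (∫ t in (-1 : ℝ)..1, ((1 - |t| : ℝ) : ℂ) * cexp (t * (l * y : ℝ) * I) *
        G (l * t * I))) := by
    refine intervalIntegral.tendsto_integral_filter_of_dominated_convergence (fun _ => B) ?_ ?_ ?_ ?_
    · filter_upwards [Ioo_mem_nhdsGT (zero_lt_one)] with s hs
      refine ContinuousOn.aestronglyMeasurable ?_ measurableSet_uIoc
      refine ContinuousOn.mul (by fun_prop) ?_
      refine hG.comp (by fun_prop) ?_
      intro t ht
      simpa using hs.1.le
    · filter_upwards [Ioo_mem_nhdsGT (zero_lt_one)] with s hs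
      refine Eventually.of_forall fun t ht => ?_
      rw [uIoc_of_le (by norm_num)] at ht
      have h1 := hB (s, t) ⟨⟨hs.1.le, hs.2.le⟩, ⟨ht.1.le, ht.2⟩⟩
      rw [norm_mul, norm_mul, ← ofReal_mul t, Complex.norm_exp_ofReal_mul_I, mul_one,
        Complex.norm_real]
      have h2 : ‖1 - |t|‖ ≤ 1 := by
        have : |t| ≤ 1 := abs_le.2 ⟨ht.1.le, ht.2⟩
        have := abs_nonneg t
        rw [Real.norm_eq_abs, abs_le]; constructor <;> linarith
      calc ‖1 - |t|‖ * ‖G (s + l * t * I)‖ ≤ 1 * B := by gcongr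
        _ = B := one_mul B
    · exact intervalIntegrable_const
    · refine Eventually.of_forall fun t _ => ?_
      refine Tendsto.const_mul _ ?_
      have h := (hGc t).mono (Ioi_subset_Ici_self)
      simpa [ContinuousWithinAt] using h
  refine tendsto_nhds_unique (T1.congr' ?_) T2
  filter_upwards [self_mem_nhdsWithin] with s hs
  exact WI_fubini b hb C hC G hL l y s hs

theorem WI_RL (b : ℝ → ℝ) (hb : Measurable b) (C : ℝ) (hC : ∀ u, |b u| ≤ C) (G : ℂ → ℂ)
    (hG : ContinuousOn G {z | 0 ≤ z.re})
    (hL : ∀ z : ℂ, 0 < z.re → ∫ u in Ioi (0 : ℝ), (b u : ℂ) * cexp (-z * u) = G z)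
    (l : ℝ) (hl : 0 < l) :
    Tendsto (fun y => ∫ u in Ioi (0 : ℝ), b u * fejK (l * (y - u))) atTop (𝓝 0) := by
  have h := Real.tendsto_integral_exp_smul_cocompact
    (indicator (Ioc (-1) 1) fun t : ℝ => ((1 - |t| : ℝ) : ℂ) * G (l * t * I))
  have h2 : Tendsto (fun y : ℝ => -(l * y / (2 * Real.pi))) atTop (cocompact ℝ) := by
    refine Tendsto.mono_right ?_ atBot_le_cocompact
    refine tendsto_neg_atTop_atBot.comp ?_
    refine Tendsto.atTop_div_const (by positivity) ?_
    exact tendsto_id.const_mul_atTop hl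
  have h3 := h.comp h2
  rw [tendsto_zero_iff_norm_tendsto_zero] at h3 ⊢
  refine h3.congr fun y => ?_
  rw [← Complex.norm_real (∫ u in Ioi (0 : ℝ), b u * fejK (l * (y - u))), ← integral_complex_ofReal,
    WI_limit b hb C hC G hG hL l y hl, integral_of_le (by norm_num), ← MeasureTheory.integral_indicator
    measurableSet_Ioc]
  simp only [Function.comp]
  congr 2
  ext t
  by_cases ht : t ∈ Ioc (-1 : ℝ) 1
  · simp only [indicator_of_mem ht, Circle.smul_def, Real.fourierChar_apply, smul_eq_mul]
    have : 2 * Real.pi * -(t * -(l * y / (2 * Real.pi))) = t * (l * y) := by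
      field_simp
    rw [this]
    push_cast
    ring
  · simp [indicator_of_notMem ht]

end PartC

section PartD
open Complex MeasureTheory Set Filter Topology intervalIntegral

/-- The mass `∫_{u>0} k(y-u) du` tends to the total mass. -/
theorem kernel_mass (k : ℝ → ℝ) (hk : Integrable k) :
    Tendsto (fun y => ∫ u in Ioi (0 : ℝ), k (y - u)) atTop (𝓝 (∫ w, k w)) := by
  have h1 : Tendsto (fun y => ∫ w in Iio y, k w) atTop (𝓝 (∫ w, k w)) :=
    (aecover_Iio (tendsto_id (α := ℝ))).integral_tendsto_of_countably_generated hk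
  refine h1.congr fun y => ?_
  rw [← MeasureTheory.integral_indicator measurableSet_Iio, ← MeasureTheory.integral_indicator measurableSet_Ioi,
    ← integral_sub_left_eq_self _ volume y]
  congr 1
  ext u
  by_cases hu : 0 < u <;> simp [indicator, hu]

theorem WI_squeeze (a : ℝ → ℝ) (ha : Measurable a) (C : ℝ) (h0 : ∀ u, 0 ≤ a u) (hC : ∀ u, a u ≤ C)
    (hmono : ∀ u v, 0 ≤ u → u ≤ v → a u * Real.exp (-(v - u)) ≤ a v)
    (k : ℝ → ℝ) (hk : Integrable k) (hk0 : ∀ w, 0 ≤ k w) (d Y : ℝ) :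
    (0 ≤ Y → a Y * (Real.exp (-(2 * d)) * ∫ w in Icc (-d) d, k w) ≤
      ∫ u in Ioi (0 : ℝ), a u * k (Y + d - u)) ∧
    (2 * d < Y → ∫ u in Ioi (0 : ℝ), a u * k (Y - d - u) ≤
      a Y * (Real.exp (2 * d) * ∫ w in Icc (-d) d, k w) +
        C * ((∫ w, k w) - ∫ w in Icc (-d) d, k w)) := by
  have hshift : ∀ c : ℝ, ∫ u in Icc (c - d) (c + d), k (c - u) = ∫ w in Icc (-d) d, k w := by
    intro c
    rw [← MeasureTheory.integral_indicator measurableSet_Icc, ← MeasureTheory.integral_indicator measurableSet_Icc,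
      ← integral_sub_left_eq_self ((Icc (-d) d).indicator _) volume c]
    congr 1
    ext u
    simp only [indicator]
    have : u ∈ Icc (c - d) (c + d) ↔ c - u ∈ Icc (-d) d := by
      simp only [mem_Icc]; constructor <;> rintro ⟨h1, h2⟩ <;> constructor <;> linarith
    simp only [this]
    split_ifs <;> rfl
  have hki : ∀ c : ℝ, Integrable fun u => k (c - u) := fun c => hk.comp_sub_left c
  have haki : ∀ c : ℝ, Integrable fun u => a u * k (c - u) := by
    intro c
    refine Integrable.bdd_mul (c := C) (hki c) ha.aestronglyMeasurable ?_
    exact Eventually.of_forall fun u => by rw [Real.norm_of_nonneg (h0 u)]; exact hC u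
  constructor
  · intro hY
    calc a Y * (Real.exp (-(2 * d)) * ∫ w in Icc (-d) d, k w)
        = ∫ u in Icc (Y + d - d) (Y + d + d), a Y * Real.exp (-(2 * d)) * k (Y + d - u) := by
          rw [MeasureTheory.integral_const_mul, hshift]; ring
      _ ≤ ∫ u in Icc (Y + d - d) (Y + d + d), a u * k (Y + d - u) := by
          refine setIntegral_mono_on ((hki _).const_mul _).integrableOn (haki _).integrableOn
            measurableSet_Icc fun u hu => ?_
          refine mul_le_mul_of_nonneg_right ?_ (hk0 _)
          refine le_trans ?_ (hmono Y u hY (by linarith [hu.1]))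
          refine mul_le_mul_of_nonneg_left (Real.exp_le_exp.2 ?_) (h0 _)
          linarith [hu.2]
      _ ≤ ∫ u in Ici (0 : ℝ), a u * k (Y + d - u) := by
          refine setIntegral_mono_set (haki _).integrableOn ?_ ?_
          · exact Eventually.of_forall fun u => mul_nonneg (h0 _) (hk0 _)
          · refine LE.le.eventuallyLE fun u (hu : u ∈ Icc _ _) => ?_
            show (0 : ℝ) ≤ u; linarith [hu.1]
      _ = _ := integral_Ici_eq_integral_Ioi
  · intro hY
    set S := Icc (Y - d - d) (Y - d + d) with hS
    calc ∫ u in Ioi (0 : ℝ), a u * k (Y - d - u)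
        ≤ ∫ u, a u * k (Y - d - u) := by
          refine setIntegral_le_integral (haki _) ?_
          exact Eventually.of_forall fun u => mul_nonneg (h0 _) (hk0 _)
      _ = (∫ u in S, a u * k (Y - d - u)) + ∫ u in Sᶜ, a u * k (Y - d - u) :=
          (integral_add_compl measurableSet_Icc (haki _)).symm
      _ ≤ (∫ u in S, a Y * Real.exp (2 * d) * k (Y - d - u)) + ∫ u in Sᶜ, C * k (Y - d - u) := by
          refine add_le_add ?_ ?_
          · refine setIntegral_mono_on (haki _).integrableOn ((hki _).const_mul _).integrableOn
              measurableSet_Icc fun u hu => ?_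
            refine mul_le_mul_of_nonneg_right ?_ (hk0 _)
            have h1 := hmono u Y (by linarith [hu.1]) (by linarith [hu.2])
            calc a u = a u * Real.exp (-(Y - u)) * Real.exp (Y - u) := by
                  rw [mul_assoc, ← Real.exp_add]; simp
              _ ≤ a Y * Real.exp (2 * d) := by
                  have := h0 Y
                  gcongr
                  linarith [hu.1]
          · refine setIntegral_mono_on (haki _).integrableOn ((hki _).const_mul _).integrableOn
              measurableSet_Icc.compl fun u hu => ?_
            exact mul_le_mul_of_nonneg_right (hC u) (hk0 _)
      _ = _ := by
          rw [MeasureTheory.integral_const_mul, MeasureTheory.integral_const_mul]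
          have e := integral_add_compl (s := S) measurableSet_Icc (hki (Y - d))
          rw [hS, hshift, ← hS, integral_sub_left_eq_self k volume (Y - d)] at e
          rw [hS, hshift, ← hS, ← e]
          ring

theorem WienerIkehara (a : ℝ → ℝ) (ha : Measurable a) (C : ℝ) (h0 : ∀ u, 0 ≤ a u)
    (hC : ∀ u, a u ≤ C)
    (hmono : ∀ u v, 0 ≤ u → u ≤ v → a u * Real.exp (-(v - u)) ≤ a v)
    (G : ℂ → ℂ) (hG : ContinuousOn G {z | 0 ≤ z.re})
    (hL : ∀ z : ℂ, 0 < z.re →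
      ∫ u in Ioi (0 : ℝ), ((a u - 1 : ℝ) : ℂ) * cexp (-z * u) = G z) :
    Tendsto a atTop (𝓝 1) := by
  have hC0 : 0 ≤ C := (h0 0).trans (hC 0)
  have conv : ∀ l : ℝ, 0 < l → Tendsto (fun y => ∫ u in Ioi (0 : ℝ), a u * fejK (l * (y - u))) atTop
      (𝓝 (∫ w, fejK (l * w))) := by
    intro l hl
    have h1 := WI_RL (fun u => a u - 1) (ha.sub_const 1) (C + 1)
      (fun u => by rw [abs_le]; constructor <;> linarith [h0 u, hC u]) G hG hL l hl
    have h2 := kernel_mass (fun w => fejK (l * w)) (fejK_integrable.comp_mul_left' hl.ne')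
    have h3 := h1.add h2
    rw [zero_add] at h3
    refine h3.congr fun y => ?_
    have i1 := (fejK_comp_integrable l y hl).integrableOn (s := Ioi 0)
    have i2 : IntegrableOn (fun u => (a u - 1) * fejK (l * (y - u))) (Ioi 0) := by
      refine Integrable.bdd_mul (c := C + 1) i1 (ha.sub_const 1).aestronglyMeasurable ?_
      exact Eventually.of_forall fun u => by
        rw [Real.norm_eq_abs, abs_le]; constructor <;> linarith [h0 u, hC u]
    rw [← integral_add i2 i1]
    congr 1
    ext u
    ring
  -- the mass
  set κ := ∫ x, fejK x with hκ
  have hκ0 : 0 < κ := fejK_integral_pos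
  have main : ∀ η : ℝ, 0 < η → η < 1 → ∀ᶠ Y in atTop,
      a Y * (Real.exp (-(2 * η)) * (1 - η)) ≤ 1 + η ∧
      1 - η ≤ a Y * Real.exp (2 * η) + C * η := by
    intro η hη hη1
    -- choose R
    have hR : Tendsto (fun R : ℝ => ∫ w in Icc (-R) R, fejK w) atTop (𝓝 κ) :=
      (aecover_Icc tendsto_neg_atTop_atBot tendsto_id).integral_tendsto_of_countably_generated
        fejK_integrable
    obtain ⟨R, hR1, hR0⟩ := ((hR.eventually_const_lt (show κ * (1 - η) < κ by nlinarith)).and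
      (eventually_gt_atTop 0)).exists
    set l := R / η with hl
    have hl0 : 0 < l := div_pos hR0 hη
    set k : ℝ → ℝ := fun w => fejK (l * w) with hk
    have hki : Integrable k := fejK_integrable.comp_mul_left' hl0.ne'
    have hk0 : ∀ w, 0 ≤ k w := fun w => fejK_nonneg _
    set I₀ := ∫ w, k w with hI
    set J := ∫ w in Icc (-η) η, k w with hJ
    have hIval : I₀ = κ / l := by
      rw [hI, hk, Measure.integral_comp_mul_left, abs_of_pos (inv_pos.2 hl0), smul_eq_mul, hκ]
      ring
    have hJval : J = (∫ w in Icc (-R) R, fejK w) / l := by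
      rw [hJ, hk, integral_Icc_eq_integral_Ioc, ← integral_of_le (by linarith),
        integral_comp_mul_left _ hl0.ne', smul_eq_mul, integral_Icc_eq_integral_Ioc,
        ← integral_of_le (by linarith)]
      have e : l * η = R := by rw [hl]; field_simp
      rw [mul_neg, e]
      ring
    have hI0 : 0 < I₀ := by rw [hIval]; positivity
    have hJ1 : I₀ * (1 - η) ≤ J := by
      rw [hIval, hJval, div_mul_eq_mul_div]
      gcongr
    have hJ2 : J ≤ I₀ := setIntegral_le_integral hki (Eventually.of_forall hk0)
    have c := conv l hl0
    have c1 := c.comp (tendsto_atTop_add_const_right atTop η tendsto_id)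
    have c2 := c.comp (tendsto_atTop_add_const_right atTop (-η) tendsto_id)
    filter_upwards [c1.eventually_lt_const (show I₀ < I₀ * (1 + η) by nlinarith),
      c2.eventually_const_lt (show I₀ * (1 - η) < I₀ by nlinarith),
      eventually_gt_atTop (2 * η)] with Y e1 e2 e3
    obtain ⟨s1, s2⟩ := WI_squeeze a ha C h0 hC hmono k hki hk0 η Y
    have s1 := s1 (by linarith)
    have s2 := s2 e3
    simp only [Function.comp, id] at e1 e2
    rw [← sub_eq_add_neg] at e2
    have hE := Real.exp_pos (-(2 * η))
    have hE2 := Real.exp_pos (2 * η)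
    have ha0 := h0 Y
    constructor
    · have t1 : a Y * (Real.exp (-(2 * η)) * (I₀ * (1 - η))) ≤ I₀ * (1 + η) := by
        refine le_trans ?_ (s1.trans e1.le)
        gcongr
      refine le_of_mul_le_mul_left ?_ hI0
      linarith
    · have t2 : I₀ * (1 - η) ≤ a Y * (Real.exp (2 * η) * I₀) + C * (I₀ * η) := by
        refine (e2.le.trans s2).trans ?_
        gcongr
        linarith
      refine le_of_mul_le_mul_left ?_ hI0
      linarith
  rw [Metric.tendsto_atTop']
  intro ε hε
  have f1 : Tendsto (fun η : ℝ => (1 + η) / (Real.exp (-(2 * η)) * (1 - η))) (𝓝[>] 0) (𝓝 1) := by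
    have : ContinuousAt (fun η : ℝ => (1 + η) / (Real.exp (-(2 * η)) * (1 - η))) 0 := by
      refine ContinuousAt.div (by fun_prop) (by fun_prop) (by simp)
    have := this.tendsto
    simp at this
    exact this.mono_left nhdsWithin_le_nhds
  have f2 : Tendsto (fun η : ℝ => (1 - η - C * η) / (Real.exp (2 * η))) (𝓝[>] 0) (𝓝 1) := by
    have : ContinuousAt (fun η : ℝ => (1 - η - C * η) / (Real.exp (2 * η))) 0 := by
      refine ContinuousAt.div (by fun_prop) (by fun_prop) (by simp)
    have := this.tendsto
    simp at this
    exact this.mono_left nhdsWithin_le_nhds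
  obtain ⟨η, ⟨g1, g2⟩, g3⟩ := (((f1.eventually_lt_const (show 1 < 1 + ε by linarith)).and
    (f2.eventually_const_lt (show 1 - ε < 1 by linarith))).and
    (Ioo_mem_nhdsGT (zero_lt_one (α := ℝ)))).exists
  obtain ⟨N, hN⟩ := eventually_atTop.1 (main η g3.1 g3.2)
  refine ⟨N, fun Y hY => ?_⟩
  obtain ⟨m1, m2⟩ := hN Y (le_of_lt hY)
  have hE := Real.exp_pos (-(2 * η))
  have hE2 := Real.exp_pos (2 * η)
  have h1η : 0 < 1 - η := by linarith [g3.2]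
  rw [← le_div_iff₀ (by positivity)] at m1
  have m3 : (1 - η - C * η) / (Real.exp (2 * η)) ≤ a Y := by
    rw [div_le_iff₀ hE2]; linarith
  rw [Real.dist_eq, abs_lt]
  constructor <;> linarith

end PartD

section PartE
open Complex MeasureTheory Set Filter Topology
open Chebyshev

theorem psi_laplace (z : ℂ) (hz : 0 < z.re) :
    LSeries (fun n => (ArithmeticFunction.vonMangoldt n : ℂ)) (1 + z) = (1 + z) *
      ∫ u in Ioi (0 : ℝ), ((psi (Real.exp u) * Real.exp (-u) : ℝ) : ℂ) * cexp (-z * u) := by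
  have hO : (fun n : ℕ ↦ ∑ k ∈ Finset.Icc 1 n, ArithmeticFunction.vonMangoldt k) =O[atTop]
      fun n ↦ (n : ℝ) ^ (1 : ℝ) := by
    refine Asymptotics.IsBigO.of_bound (Real.log 4 + 4) (Eventually.of_forall fun n => ?_)
    have h := psi_le_const_mul_self (x := n) (Nat.cast_nonneg n)
    have e : psi n = ∑ k ∈ Finset.Icc 1 n, ArithmeticFunction.vonMangoldt k := by
      rw [psi, Nat.floor_natCast]; rfl
    rw [← e, Real.rpow_one, Real.norm_of_nonneg (psi_nonneg _), Real.norm_of_nonneg (Nat.cast_nonneg n)]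
    exact h
  rw [LSeries_eq_mul_integral_of_nonneg _ zero_le_one (s := 1 + z) (by simpa using hz) hO
    (fun n => ArithmeticFunction.vonMangoldt_nonneg)]
  congr 1
  have himg : Real.exp '' Ioi 0 = Ioi 1 := by
    ext x
    constructor
    · rintro ⟨u, hu, rfl⟩; exact Real.one_lt_exp_iff.2 hu
    · intro hx
      have hx : 1 < x := hx
      exact ⟨Real.log x, Real.log_pos hx, Real.exp_log (by linarith)⟩
  rw [← himg, integral_image_eq_integral_abs_deriv_smul measurableSet_Ioi
    (fun u _ => (Real.hasDerivAt_exp u).hasDerivWithinAt) Real.exp_injective.injOn]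
  refine integral_congr_ae (Eventually.of_forall fun u => ?_)
  simp only
  rw [abs_of_pos (Real.exp_pos u)]
  have e : psi (Real.exp u) =
    ∑ k ∈ Finset.Icc 1 ⌊Real.exp u⌋₊, ArithmeticFunction.vonMangoldt k := rfl
  rw [e]
  have h1 : ((Real.exp u : ℝ) : ℂ) ^ (-(1 + z + 1)) = cexp (-u) * (cexp (-u) * cexp (-z * u)) := by
    rw [cpow_def_of_ne_zero (by exact_mod_cast (Real.exp_pos u).ne'), ← ofReal_log (Real.exp_pos u).le,
      Real.log_exp, ← Complex.exp_add, ← Complex.exp_add]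
    congr 1; ring
  rw [h1]
  have h2 : cexp u * cexp (-u) = 1 := by rw [← Complex.exp_add]; simp
  rw [Complex.real_smul]
  push_cast
  linear_combination (∑ x ∈ Finset.Icc 1 ⌊Real.exp u⌋₊, (ArithmeticFunction.vonMangoldt x : ℂ)) *
    (cexp (-u) * cexp (-z * u)) * h2

theorem psi_pnt : Tendsto (fun u => psi (Real.exp u) * Real.exp (-u)) atTop (𝓝 1) := by
  have hm : Measurable fun u => psi (Real.exp u) * Real.exp (-u) := by
    have := psi_mono.measurable
    fun_prop
  have hC : ∀ u, psi (Real.exp u) * Real.exp (-u) ≤ Real.log 4 + 4 := by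
    intro u
    rw [Real.exp_neg, ← div_eq_mul_inv, div_le_iff₀ (Real.exp_pos u)]
    exact psi_le_const_mul_self (Real.exp_pos u).le
  have h0 : ∀ u, 0 ≤ psi (Real.exp u) * Real.exp (-u) := fun u =>
    mul_nonneg (psi_nonneg _) (Real.exp_pos _).le
  let A : ℂ → ℂ := ArithmeticFunction.vonMangoldt.LFunctionResidueClassAux (q := 1) 1
  have hA : ContinuousOn A {s | 1 ≤ s.re} :=
    ArithmeticFunction.vonMangoldt.continuousOn_LFunctionResidueClassAux 1
  have hA2 : ∀ s : ℂ, 1 < s.re →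
      A s = LSeries (fun n => (ArithmeticFunction.vonMangoldt n : ℂ)) s - 1 / (s - 1) := by
    intro s hs
    have := ArithmeticFunction.vonMangoldt.eqOn_LFunctionResidueClassAux (q := 1) (a := 1)
      isUnit_one hs
    simp only [Nat.totient_one, Nat.cast_one, inv_one] at this
    rw [show A s = _ from this]
    congr 1
    refine LSeries_congr (fun {n} _ => ?_) s
    have hn : (n : ZMod 1) = 1 := Subsingleton.elim _ _
    simp [ArithmeticFunction.vonMangoldt.residueClass, hn]
  refine WienerIkehara _ hm (Real.log 4 + 4) h0 hC ?_ (fun z => (A (1 + z) - 1) / (1 + z)) ?_ ?_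
  · intro u v hu huv
    rw [mul_assoc, ← Real.exp_add, show -u + -(v - u) = -v by ring]
    exact mul_le_mul_of_nonneg_right (psi_mono (Real.exp_le_exp.2 huv)) (Real.exp_pos _).le
  · refine ContinuousOn.div ((hA.comp (by fun_prop) ?_).sub continuousOn_const) (by fun_prop) ?_
    · intro z hz
      have : 0 ≤ z.re := hz
      simpa using this
    · intro z hz h
      have : 0 ≤ z.re := hz
      have h := congrArg Complex.re h
      simp at h
      linarith
  · intro z hz
    have hz0 : z ≠ 0 := by rintro rfl; simp at hz
    have hz1 : 1 + z ≠ 0 := by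
      intro h
      have h := congrArg Complex.re h
      simp at h
      linarith
    have hb : IntegrableOn (fun u : ℝ => cexp (-z * u)) (Ioi 0) :=
      integrableOn_exp_mul_complex_Ioi (by simpa using hz) 0
    have hi : ∫ u in Ioi (0 : ℝ), cexp (-z * u) = 1 / z := by
      rw [integral_exp_mul_complex_Ioi (by simpa using hz) 0]
      simp
    have ha : IntegrableOn (fun u : ℝ => ((psi (Real.exp u) * Real.exp (-u) : ℝ) : ℂ) *
        cexp (-z * u)) (Ioi 0) := by
      refine Integrable.bdd_mul (c := Real.log 4 + 4) hb ?_ ?_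
      · exact (Complex.measurable_ofReal.comp hm).aestronglyMeasurable
      · refine Eventually.of_forall fun u => ?_
        rw [Complex.norm_real, Real.norm_of_nonneg (h0 u)]
        exact hC u
    have e : ∀ u : ℝ, ((psi (Real.exp u) * Real.exp (-u) - 1 : ℝ) : ℂ) * cexp (-z * u) =
      ((psi (Real.exp u) * Real.exp (-u) : ℝ) : ℂ) * cexp (-z * u) - cexp (-z * u) := by
      intro u; push_cast; ring
    simp only [e]
    rw [integral_sub ha hb, hi, hA2 _ (by simpa using hz), psi_laplace z hz, add_sub_cancel_left]
    field_simp
    ring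

theorem theta_pnt : Tendsto (fun x => theta x / x) atTop (𝓝 1) := by
  have h1 : Tendsto (fun x => psi x / x) atTop (𝓝 1) := by
    refine (psi_pnt.comp Real.tendsto_log_atTop).congr' ?_
    filter_upwards [eventually_gt_atTop 0] with x hx
    simp [Real.exp_neg, Real.exp_log hx, div_eq_mul_inv]
  have h2 : Tendsto (fun x => (psi x - theta x) / x) atTop (𝓝 0) := by
    have : (psi - theta) =o[atTop] (fun x : ℝ => x) := by
      refine isBigO_psi_sub_theta_sqrt.trans_isLittleO ?_
      refine (Asymptotics.isLittleO_iff_tendsto' ?_).2 ?_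
      · filter_upwards [eventually_gt_atTop 0] with x hx h
        exact absurd h hx.ne'
      · simp only [Real.sqrt_div_self']
        exact tendsto_const_nhds.div_atTop Real.tendsto_sqrt_atTop
    exact this.tendsto_div_nhds_zero
  have h3 := h1.sub h2
  rw [sub_zero] at h3
  refine h3.congr fun x => ?_
  ring

end PartE

section PartF
open Filter Topology Chebyshev Nat Finset

theorem pT_eq (N : ℕ) : ∑ p ∈ primesLE N, (p : ℝ) * Real.log p =
    N * theta N - ∑ k ∈ range N, theta k := by
  induction N with
  | zero => simp [primesLE]
  | succ N ih =>
    have h : theta ((N + 1 : ℕ) : ℝ) = theta N + if (N + 1).Prime then Real.log (N + 1 : ℕ) else 0 := by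
      rw [theta_eq_sum_primesLE_log, theta_eq_sum_primesLE_log, primesLE_succ]
      split_ifs with h
      · rw [sum_insert (by simp [mem_primesLE])]; ring
      · simp
    rw [sum_range_succ, h, primesLE_succ]
    split_ifs with h
    · rw [sum_insert (by simp [mem_primesLE]), ih]; push_cast; ring
    · rw [ih]; push_cast; ring

theorem theta_bound (η : ℝ) (hη : 0 < η) : ∃ C : ℝ, 0 ≤ C ∧ ∀ k : ℕ, |theta k - k| ≤ η * k + C := by
  have h := theta_pnt.comp tendsto_natCast_atTop_atTop
  rw [Metric.tendsto_atTop] at h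
  obtain ⟨K, hK⟩ := h η hη
  refine ⟨theta K + K, add_nonneg (theta_nonneg _) (Nat.cast_nonneg _), fun k => ?_⟩
  have hθ := theta_nonneg K
  by_cases hk : K ≤ k ∧ 0 < k
  · have := hK k hk.1
    have hk0 : (0 : ℝ) < k := by exact_mod_cast hk.2
    simp only [Function.comp, Real.dist_eq] at this
    have e : theta k - k = (theta k / k - 1) * k := by field_simp
    rw [e, abs_mul, abs_of_pos hk0]
    have : |theta k / k - 1| * k ≤ η * k := by gcongr
    have : (0 : ℝ) ≤ K := Nat.cast_nonneg _
    linarith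
  · have hkK : k ≤ K := by omega
    have h1 : theta k ≤ theta K := theta_mono (by exact_mod_cast hkK)
    have h2 : (k : ℝ) ≤ K := by exact_mod_cast hkK
    have h3 := theta_nonneg k
    have h4 : (0 : ℝ) ≤ k := Nat.cast_nonneg _
    have : 0 ≤ η * k := by positivity
    rw [abs_le]; constructor <;> linarith

theorem pT_le (η : ℝ) (hη : 0 < η) : ∃ D : ℝ, ∀ N : ℕ,
    ∑ p ∈ primesLE N, (p : ℝ) * Real.log p ≤ (1 / 2 + 2 * η) * N ^ 2 + D * N := by
  obtain ⟨C, hC0, hC⟩ := theta_bound η hη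
  refine ⟨2 * C + 1 / 2, fun N => ?_⟩
  rw [pT_eq]
  have h1 : ∀ k : ℕ, (1 - η) * k - C ≤ theta k := fun k => by
    have := (abs_le.1 (hC k)).1; linarith
  have h2 : theta N ≤ (1 + η) * N + C := by
    have := (abs_le.1 (hC N)).2; linarith
  have h3 : ∑ k ∈ range N, ((1 - η) * k - C) ≤ ∑ k ∈ range N, theta k := sum_le_sum fun k _ => h1 k
  have h4 : ∑ k ∈ range N, ((1 - η) * (k : ℝ) - C) = (1 - η) * (N * (N - 1) / 2) - C * N := by
    rw [sum_sub_distrib, ← mul_sum]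
    have : ∑ k ∈ range N, (k : ℝ) = N * (N - 1) / 2 := by
      clear h1 h2 h3
      induction N with
      | zero => simp
      | succ N ih => rw [sum_range_succ, ih]; push_cast; ring
    rw [this]; simp; ring
  have hN : (0 : ℝ) ≤ N := Nat.cast_nonneg _
  have h5 : N * theta N ≤ N * ((1 + η) * N + C) := mul_le_mul_of_nonneg_left h2 hN
  have h6 : 0 ≤ η * N ^ 2 := by positivity
  have h7 : 0 ≤ η * N := by positivity
  nlinarith

theorem pS_le (η : ℝ) (hη : 0 < η) : ∀ᶠ N : ℕ in atTop,
    (∑ p ∈ primesLE N, ((p : ℝ) + 1)) * Real.log N ≤ (1 / 2 + η) * N ^ 2 := by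
  obtain ⟨D, hD⟩ := pT_le (η / 8) (by positivity)
  have hpi := (eventually_primeCounting_le one_pos)
  have hlog : ∀ᶠ x : ℝ in atTop, 8 * (Real.log 4 + 1) / η ≤ Real.log x :=
    Real.tendsto_log_atTop.eventually_ge_atTop _
  have hbig : ∀ᶠ x : ℝ in atTop, 4 * (D + Real.log 4) / η ≤ x := eventually_ge_atTop _
  filter_upwards [tendsto_natCast_atTop_atTop.eventually hpi,
    tendsto_natCast_atTop_atTop.eventually hlog, tendsto_natCast_atTop_atTop.eventually hbig,
    eventually_gt_atTop 1] with N h1 h2 h3 h4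
  have hN : (1 : ℝ) < N := by exact_mod_cast h4
  have hl : 0 < Real.log N := Real.log_pos hN
  have hth := theta_le_log4_mul_x (x := N) (by positivity)
  have hpiN : (#(primesLE N) : ℝ) ≤ η / 8 * N := by
    have e : (#(primesLE N) : ℝ) = primeCounting N := by
      rw [primesLE_card_eq_primeCounting]
    rw [e]
    simp only [Nat.floor_natCast] at h1
    refine h1.trans ?_
    rw [div_le_iff₀ hη] at h2
    rw [div_le_iff₀ hl]
    nlinarith
  have key : ∀ p ∈ primesLE N, ((p : ℝ) + 1) * Real.log N ≤
      p * Real.log p + Real.log p + 2 * N := by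
    intro p hp
    rw [mem_primesLE] at hp
    have hp1 : (1 : ℝ) ≤ p := by exact_mod_cast hp.2.one_lt.le
    have hp0 : (0 : ℝ) < p := by linarith
    have h : Real.log N - Real.log p ≤ N / p := by
      rw [← Real.log_div (by positivity) (by positivity)]
      exact (Real.log_le_self (by positivity))
    have h' : (p + 1) * (Real.log N - Real.log p) ≤ (p + 1) * (N / p) := by gcongr
    have : ((p : ℝ) + 1) * (N / p) ≤ 2 * N := by
      rw [mul_div_assoc', div_le_iff₀ hp0]; nlinarith
    nlinarith
  rw [sum_mul]
  refine (sum_le_sum key).trans ?_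
  rw [sum_add_distrib, sum_add_distrib, ← theta_eq_sum_primesLE_log, sum_const, nsmul_eq_mul]
  have hDN := hD N
  rw [div_le_iff₀ hη] at h3
  have : (#(primesLE N) : ℝ) * (2 * N) ≤ η / 8 * N * (2 * N) := by gcongr
  nlinarith

theorem landau (ε : ℝ) (hε : 0 < ε) (hε1 : ε < 1) : ∃ N₀ : ℕ, ∀ n : ℕ, N₀ ≤ n →
    ∃ P : Finset ℕ, (∀ p ∈ P, p.Prime) ∧ P.Nonempty ∧ ∑ p ∈ P, p + P.card ≤ n ∧
      Real.exp ((1 - ε) * Real.sqrt ((n : ℝ) * Real.log (n : ℝ))) ≤ ((∏ p ∈ P, p : ℕ) : ℝ) := by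
  set c := 1 - ε / 2 with hc
  have hc0 : 0 < c := by linarith
  -- the size of the largest prime
  have hlog : Tendsto (fun n : ℕ => Real.log n) atTop atTop :=
    Real.tendsto_log_atTop.comp tendsto_natCast_atTop_atTop
  have hr : Tendsto (fun n : ℕ => Real.sqrt (n * Real.log n)) atTop atTop :=
    Real.tendsto_sqrt_atTop.comp (tendsto_natCast_atTop_atTop.atTop_mul_atTop₀ hlog)
  have hx : Tendsto (fun n : ℕ => c * Real.sqrt (n * Real.log n)) atTop atTop :=
    hr.const_mul_atTop hc0
  have hN : Tendsto (fun n : ℕ => ⌊c * Real.sqrt (n * Real.log n)⌋₊) atTop atTop :=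
    tendsto_nat_floor_atTop.comp hx
  have hth := (theta_pnt.comp tendsto_natCast_atTop_atTop).eventually_const_lt
    (show 1 - ε / 4 < 1 by linarith)
  have ev : ∀ᶠ n : ℕ in atTop, ∃ P : Finset ℕ, (∀ p ∈ P, p.Prime) ∧ P.Nonempty ∧
      ∑ p ∈ P, p + P.card ≤ n ∧
      Real.exp ((1 - ε) * Real.sqrt ((n : ℝ) * Real.log (n : ℝ))) ≤ ((∏ p ∈ P, p : ℕ) : ℝ) := by
    filter_upwards [hN.eventually hth, hN.eventually (pS_le (ε / 4) (by positivity)),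
      hN.eventually_ge_atTop 2, hr.eventually_ge_atTop (4 / ε),
      hlog.eventually_ge_atTop ((2 / c) ^ 2), eventually_ge_atTop 2] with n h1 h2 h3 h4 h5 h6
    set r := Real.sqrt (n * Real.log n) with hrdef
    set N := ⌊c * r⌋₊ with hNdef
    have hn2 : (2 : ℝ) ≤ n := by exact_mod_cast h6
    have hln : 0 < Real.log n := Real.log_pos (by linarith)
    have hr0 : 0 ≤ r := Real.sqrt_nonneg _
    have hN0 : (2 : ℝ) ≤ N := by exact_mod_cast h3
    have hNle : (N : ℝ) ≤ c * r := Nat.floor_le (by positivity)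
    have hNge : c * r - 1 ≤ N := by have := Nat.lt_floor_add_one (c * r); linarith
    have hr2 : r ^ 2 = n * Real.log n := Real.sq_sqrt (by positivity)
    refine ⟨primesLE N, fun p hp => (mem_primesLE.1 hp).2, ⟨2, ?_⟩, ?_, ?_⟩
    · rw [mem_primesLE]; exact ⟨h3, Nat.prime_two⟩
    · -- the sum
      have hsn : Real.sqrt n ≤ N := by
        have a1 : 2 / c ≤ Real.sqrt (Real.log n) := Real.le_sqrt_of_sq_le h5
        have a2 : r = Real.sqrt n * Real.sqrt (Real.log n) := Real.sqrt_mul (by positivity) _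
        rw [div_le_iff₀ hc0] at a1
        have a3 : 1 ≤ Real.sqrt n := Real.one_le_sqrt.2 (by linarith)
        have : Real.sqrt n * 2 ≤ Real.sqrt n * (Real.sqrt (Real.log n) * c) := by gcongr
        rw [a2] at hNge
        nlinarith
      have hlN : Real.log n / 2 ≤ Real.log N := by
        rw [← Real.log_sqrt (by positivity)]
        exact Real.log_le_log (by positivity) hsn
      have hS0 : 0 ≤ ∑ p ∈ primesLE N, ((p : ℝ) + 1) := sum_nonneg fun p _ => by positivity
      have b1 : (∑ p ∈ primesLE N, ((p : ℝ) + 1)) * (Real.log n / 2) ≤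
          (1 / 2 + ε / 4) * (c ^ 2 * (n * Real.log n)) := by
        calc _ ≤ (∑ p ∈ primesLE N, ((p : ℝ) + 1)) * Real.log N := by gcongr
          _ ≤ (1 / 2 + ε / 4) * N ^ 2 := h2
          _ ≤ (1 / 2 + ε / 4) * (c * r) ^ 2 := by gcongr
          _ = _ := by rw [mul_pow, hr2]
      have b2 : (1 / 2 + ε / 4) * c ^ 2 ≤ 1 / 2 := by
        rw [hc]; nlinarith [mul_pos hε hε]
      have b3 : (∑ p ∈ primesLE N, ((p : ℝ) + 1)) ≤ n := by
        refine le_of_mul_le_mul_right ?_ (show 0 < Real.log n / 2 by positivity)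
        refine b1.trans ?_
        have : (1 / 2 + ε / 4) * c ^ 2 * (n * Real.log n) ≤ 1 / 2 * (n * Real.log n) := by gcongr
        linarith
      rw [sum_add_distrib, sum_const, nsmul_eq_mul, mul_one] at b3
      refine Nat.cast_le (α := ℝ).1 ?_
      push_cast
      exact b3
    · have e : ((∏ p ∈ primesLE N, p : ℕ) : ℝ) = Real.exp (theta N) := by
        rw [theta_eq_sum_primesLE_log, Real.exp_sum]
        push_cast
        refine prod_congr rfl fun p hp => ?_
        rw [Real.exp_log]
        exact_mod_cast (mem_primesLE.1 hp).2.pos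
      rw [e]
      refine Real.exp_le_exp.2 ?_
      simp only [Function.comp] at h1
      rw [lt_div_iff₀ (by linarith)] at h1
      rw [div_le_iff₀ hε] at h4
      have : (1 - ε / 4) * (c * r - 1) ≤ (1 - ε / 4) * N := by
        gcongr
        linarith
      refine le_trans ?_ (this.trans h1.le)
      rw [hc]
      nlinarith [mul_nonneg hr0 (sq_nonneg ε)]
  exact eventually_atTop.1 ev

end PartF

theorem dfa_min_univ_length_lower_bound :
    ∀ ε : ℝ, 0 < ε → ∃ N : ℕ, ∀ n : ℕ, N ≤ n →
      ∃ (Q : Type) (inst : Fintype Q), @Fintype.card Q inst = n ∧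
        ∃ M : DFA Bool Q,
          (∃ ℓ : ℕ, IsUnivLength M.accepts ℓ) ∧
          Real.exp ((1 - ε) * Real.sqrt ((n : ℝ) * Real.log (n : ℝ))) ≤
            ((sInf {ℓ : ℕ | IsUnivLength M.accepts ℓ} : ℕ) : ℝ) := by
  intro ε hε
  obtain ⟨N, hN⟩ := landau (min ε (1 / 2)) (by positivity)
    ((min_le_right _ _).trans_lt (by norm_num))
  refine ⟨N, fun n hn => ?_⟩
  obtain ⟨P, hP, hne, hsum, hprod⟩ := hN n hn
  obtain ⟨Q, inst, hcard, M, hM, hle⟩ := dfa_of_primes P hP hne n hsum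
  refine ⟨Q, inst, hcard, M, hM, ?_⟩
  refine le_trans (Real.exp_le_exp.2 ?_) (hprod.trans (by exact_mod_cast hle))
  gcongr
  exact min_le_left _ _
end

section
/- Let t ≥ 1, let Σ be an alphabet with exactly t letters a₁, …, a_t, and let p(1) < p(2) < … < p(t) be the first t prime numbers (p(1) = 2). Let L be the language of all nonempty words w over Σ such that if the first letter of w is a_i, then p(i) divides the length of w (equivalently, L = ⋃_{1 ≤ i ≤ t} a_i (Σ^{p(i)})^* Σ^{p(i)−1}). Then the least ℓ ≥ 0 such that every word of length ℓ over Σ belongs to L is ℓ = p(1)·p(2)···p(t). -/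
/-- For the alphabet `Fin t` (`t ≥ 1` letters) and the language of nonempty words `w` such that
the `i`-th prime divides `|w|` whenever the first letter of `w` is the `i`-th letter,
the least universal length is the product of the first `t` primes.
Here `Nat.nth Nat.Prime i` is the `(i+1)`-st prime, so `Nat.nth Nat.Prime 0 = 2`. -/
theorem min_univ_length_prime_cycles (t : ℕ) (ht : 1 ≤ t) :
    IsLeast
      {ℓ : ℕ | ∀ w : List (Fin t), w.length = ℓ →
        ∃ i : Fin t, w.head? = some i ∧ Nat.nth Nat.Prime (i : ℕ) ∣ w.length}
      (∏ i : Fin t, Nat.nth Nat.Prime (i : ℕ)) := by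
  have hp : ∀ i : Fin t, (Nat.nth Nat.Prime (i : ℕ)).Prime := fun i => Nat.prime_nth_prime i
  constructor
  · intro w hw
    have hpos : 0 < ∏ i : Fin t, Nat.nth Nat.Prime (i : ℕ) :=
      Finset.prod_pos fun i _ => (hp i).pos
    cases w with
    | nil =>
      rw [← hw] at hpos
      exact absurd hpos (by simp)
    | cons a l =>
      refine ⟨a, rfl, ?_⟩
      rw [hw]
      exact Finset.dvd_prod_of_mem (fun i : Fin t => Nat.nth Nat.Prime (i : ℕ))
        (Finset.mem_univ a)
  · intro m hm
    have hm0 : m ≠ 0 := by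
      rintro rfl
      obtain ⟨i, hi, _⟩ := hm [] rfl
      simp at hi
    have hd : ∀ i : Fin t, Nat.nth Nat.Prime (i : ℕ) ∣ m := by
      intro i
      obtain ⟨j, hj, hdj⟩ := hm (List.replicate m i) (by simp)
      rw [List.head?_replicate, if_neg hm0] at hj
      obtain rfl := Option.some.inj hj
      simpa using hdj
    apply Nat.le_of_dvd (Nat.pos_of_ne_zero hm0)
    have hz : (∏ i : Fin t, ((Nat.nth Nat.Prime (i : ℕ) : ℕ) : ℤ)) ∣ (m : ℤ) := by
      refine Fintype.prod_dvd_of_coprime ?_ fun i => Int.natCast_dvd_natCast.mpr (hd i)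
      intro i j hij
      refine Nat.isCoprime_iff_coprime.mpr ((Nat.coprime_primes (hp i) (hp j)).mpr fun h => hij ?_)
      exact Fin.ext (Nat.nth_injective Nat.infinite_setOf_prime h)
    exact_mod_cast hz
end
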